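/- arXiv:1407.7804 — 2 statements merged into one kernel-verified Lean document; each statement's English description precedes it below -/
import Mathlib

section
/- For every ε > 0 there exist constants C', W₀ > 0 (depending on ε, C, and the constant in the hypothesis on α) such that for all W ≥ W₀ and all real α > 0 satisfying |α² − W²ζ²U''(0)/2| ≤ C·W^{3/2}, the double integral I(α) = ∬_{ℝ²} exp(−W²ζ²(x−y)² − U(x)/2 − αx² − U(y)/2 − αy²) dx dy satisfies |I(α) − √(π/(W²ζ² + α))·√(π/(2α))| ≤ C'·W^{−3/2+ε}·|√(π/(W²ζ² + α))·√(π/(2α))| (principal square roots). -/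
open MeasureTheory Complex Real
open scoped ComplexInnerProductSpace

noncomputable section

/-- The Hilbert space `L²(ℝ, ℂ)`. -/
abbrev Hsp : Type := Lp ℂ 2 (volume : Measure ℝ)

/-- The kernel `K(x,y) = exp(−W²ζ²(x−y)² − U(x)/2 − U(y)/2)`. -/
def kerK (W : ℝ) (ζ : ℂ) (U : ℝ → ℂ) (x y : ℝ) : ℂ :=
  Complex.exp (-(W : ℂ)^2 * ζ^2 * ((x : ℂ) - (y : ℂ))^2 - U x / 2 - U y / 2)

/-- The harmonic-approximation kernel `K̃(x,y) = exp(−W²ζ²(x−y)² − (U''(0)/4)(x²+y²))`. -/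
def kerKt (W : ℝ) (ζ : ℂ) (U : ℝ → ℂ) (x y : ℝ) : ℂ :=
  Complex.exp (-(W : ℂ)^2 * ζ^2 * ((x : ℂ) - (y : ℂ))^2
    - (deriv (deriv U) 0 / 4) * ((x : ℂ)^2 + (y : ℂ)^2))

/-- `α = W·√(ζ²U''(0)/2)`, a positive real by assumption (U2). -/
def alph (W : ℝ) (ζ : ℂ) (U : ℝ → ℂ) : ℝ :=
  W * Real.sqrt ((ζ^2 * deriv (deriv U) 0).re / 2)

/-- `μ = √(π/(W²ζ² + α))`, principal branch. -/
def muK (W : ℝ) (ζ : ℂ) (U : ℝ → ℂ) : ℂ :=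
  ((π : ℂ) / ((W : ℂ)^2 * ζ^2 + (alph W ζ U : ℂ))) ^ (1/2 : ℂ)

/-- The Gaussian `g_α(x) = (2α/π)^{1/4}·exp(−αx²)` (for real `α > 0`, a unit vector). -/
def gaussF (α : ℝ) (x : ℝ) : ℂ :=
  (((2*α/π) ^ (1/4 : ℝ) : ℝ) : ℂ) * Complex.exp (-(α : ℂ) * (x : ℂ)^2)

/-- `T` is the integral operator on `L²(ℝ)` with kernel `k`. -/
def IsKerOp (k : ℝ → ℝ → ℂ) (T : Hsp →L[ℂ] Hsp) : Prop :=
  ∀ f : Hsp, ∀ᵐ x : ℝ, (T f : ℝ → ℂ) x = ∫ y : ℝ, k x y * (f : ℝ → ℂ) y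

/-- The orthogonal projection of `L²(ℝ)` onto the orthogonal complement of the
unit vector `g`: `P u = u − ⟪g, u⟫·g`. -/
def projP (g : Hsp) : Hsp →L[ℂ] Hsp :=
  ContinuousLinearMap.id ℂ Hsp - (innerSL ℂ g).smulRight g

/-- Assumptions (U1)–(U4) on the potential `U`, together with the conditions on `ζ`. -/
structure UHyp (C c γ : ℝ) (ζ : ℂ) (U : ℝ → ℂ) : Prop where
  hζ : ‖ζ‖ = 1
  hζre : 0 < (ζ^2).re
  hU1smooth : ContDiff ℝ (⊤ : ℕ∞) U
  hU1zero : U 0 = 0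
  hU1deriv : deriv U 0 = 0
  hU2im : (ζ^2 * deriv (deriv U) 0).im = 0
  hU2pos : 0 < (ζ^2 * deriv (deriv U) 0).re
  hU3 : ∀ x : ℝ, (1/C) * min 1 (x^2) ≤ (U x).re
  hU4 : ∃ UC : ℂ → ℂ, (∀ x : ℝ, UC x = U x) ∧
      AnalyticOnNhd ℂ UC {z : ℂ | |z.im| ≤ c} ∧
      ∀ z : ℂ, |z.im| ≤ c → ‖deriv UC z‖ ≤ C * (max 1 (UC z).re) ^ γ

end

/-!
Since `Re U ≥ 0`, the weight `exp (-U / 2)` differs from its quadratic model `exp (-U''(0) x² / 4)`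
by at most a multiple of `|x|³`, globally. Integrated against the kernel, whose modulus is dominated
by `exp (-α x²) exp (-Re A (x - y)²)` with `A = W²ζ²`, this costs a factor `1 + O(α ^ (-3/2))`.
The model integral is an exact Gaussian, `√(π / (A + β)) √(π / γ)` with `β = α + U''(0) / 4` and
`γ` the Schur complement `β + Aβ / (A + β)`. The assumption on `α` says precisely that `γ` is close
to `2α`: it forces `α` to be of order `W`, and `γ - 2α = O(W ^ (-1/2))`. All relative errors are
then `O(W ^ (-3/2))`, without any loss `ε`.
-/

section SquareRoot

lemma abs_im_cpow_half_le_re {z : ℂ} (hz : 0 ≤ z.re) :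
    |(z ^ (1 / 2 : ℂ)).im| ≤ (z ^ (1 / 2 : ℂ)).re := by
  rw [one_div, abs_cpow_inv_two_im, cpow_inv_two_re]
  exact Real.sqrt_le_sqrt (by linarith)

lemma norm_le_norm_add_of_abs_im_le_re {p q : ℂ} (hp : |p.im| ≤ p.re) (hq : |q.im| ≤ q.re) :
    ‖q‖ ≤ ‖p + q‖ := by
  have inner_nonneg : 0 ≤ p.re * q.re + p.im * q.im := by
    have := mul_le_mul hp hq (abs_nonneg _) ((abs_nonneg _).trans hp)
    rw [← abs_mul] at this
    linarith [neg_abs_le (p.im * q.im)]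
  refine le_of_sq_le_sq ?_ (norm_nonneg _)
  rw [Complex.sq_norm, Complex.sq_norm, normSq_apply, normSq_apply, add_re, add_im]
  nlinarith [mul_self_nonneg p.re, mul_self_nonneg p.im]

/-- Principal square roots of numbers in the right half-plane lie in the sector `|arg| ≤ π / 4`,
so no cancellation occurs in the sum `√z + √w` by which `z - w` is divided. -/
lemma norm_cpow_half_sub_cpow_half_mul_le {z w : ℂ} (hz : 0 ≤ z.re) (hw : 0 ≤ w.re) :
    ‖z ^ (1 / 2 : ℂ) - w ^ (1 / 2 : ℂ)‖ * ‖w ^ (1 / 2 : ℂ)‖ ≤ ‖z - w‖ := by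
  have sq_half (v : ℂ) : (v ^ (1 / 2 : ℂ)) ^ 2 = v := by simp
  calc ‖z ^ (1 / 2 : ℂ) - w ^ (1 / 2 : ℂ)‖ * ‖w ^ (1 / 2 : ℂ)‖
      ≤ ‖z ^ (1 / 2 : ℂ) - w ^ (1 / 2 : ℂ)‖ * ‖z ^ (1 / 2 : ℂ) + w ^ (1 / 2 : ℂ)‖ := by
        gcongr
        exact norm_le_norm_add_of_abs_im_le_re (abs_im_cpow_half_le_re hz)
          (abs_im_cpow_half_le_re hw)
    _ = ‖z - w‖ := by
        rw [← norm_mul, mul_comm, ← sq_sub_sq, sq_half, sq_half]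

lemma norm_cpow_half (z : ℂ) : ‖z ^ (1 / 2 : ℂ)‖ = √‖z‖ := by
  rw [eq_comm, Real.sqrt_eq_iff_eq_sq (norm_nonneg _) (norm_nonneg _), ← norm_pow]
  simp

lemma norm_cpow_half_pi_div (z : ℂ) : ‖((π : ℂ) / z) ^ (1 / 2 : ℂ)‖ = √(π / ‖z‖) := by
  rw [norm_cpow_half, norm_div, norm_real, Real.norm_of_nonneg pi_nonneg]

lemma re_inv_pos {z : ℂ} (hz : 0 < z.re) : 0 < z⁻¹.re := by
  rw [inv_re]
  exact div_pos hz (normSq_pos.2 (ne_zero_of_re_pos hz))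

lemma norm_cpow_half_pi_div_sub_le {z w : ℂ} (hz : 0 < z.re) (hw : 0 < w.re) :
    ‖((π : ℂ) / z) ^ (1 / 2 : ℂ) - ((π : ℂ) / w) ^ (1 / 2 : ℂ)‖
      ≤ ‖z - w‖ / ‖z‖ * ‖((π : ℂ) / w) ^ (1 / 2 : ℂ)‖ := by
  have re_pi_div {v : ℂ} (hv : 0 < v.re) : 0 ≤ ((π : ℂ) / v).re := by
    rw [div_eq_mul_inv, re_ofReal_mul]
    exact mul_nonneg pi_nonneg (re_inv_pos hv).le
  have hz0 : z ≠ 0 := ne_zero_of_re_pos hz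
  have hw0 : w ≠ 0 := ne_zero_of_re_pos hw
  have hpos : 0 < ‖((π : ℂ) / w) ^ (1 / 2 : ℂ)‖ := by
    rw [norm_cpow_half_pi_div]
    positivity
  refine le_of_mul_le_mul_right
    ((norm_cpow_half_sub_cpow_half_mul_le (re_pi_div hz) (re_pi_div hw)).trans_eq ?_) hpos
  calc ‖(π : ℂ) / z - π / w‖ = ‖z - w‖ / ‖z‖ * (π / ‖w‖) := by
        rw [div_sub_div _ _ hz0 hw0, mul_comm z, ← mul_sub, norm_div, norm_mul, norm_mul, norm_real,
          Real.norm_of_nonneg pi_nonneg, norm_sub_rev]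
        ring
    _ = _ := by
        rw [mul_assoc, norm_cpow_half_pi_div, Real.mul_self_sqrt (by positivity)]

end SquareRoot

lemma norm_mul_sub_mul_le_of_norm_sub_le_mul {𝕜 : Type*} [NormedDivisionRing 𝕜] {p q p' q' : 𝕜}
    {δ δ' : ℝ} (h : ‖p - q‖ ≤ δ * ‖q‖) (h' : ‖p' - q'‖ ≤ δ' * ‖q'‖) :
    ‖p * p' - q * q'‖ ≤ (δ + δ' + δ * δ') * ‖q * q'‖ := by
  calc ‖p * p' - q * q'‖
      = ‖(p - q) * q' + q * (p' - q') + (p - q) * (p' - q')‖ := by noncomm_ring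
    _ ≤ ‖p - q‖ * ‖q'‖ + ‖q‖ * ‖p' - q'‖ + ‖p - q‖ * ‖p' - q'‖ := by
        rw [← norm_mul, ← norm_mul, ← norm_mul]
        exact norm_add₃_le
    _ ≤ δ * ‖q‖ * ‖q'‖ + ‖q‖ * (δ' * ‖q'‖) + δ * ‖q‖ * (δ' * ‖q'‖) := by
        gcongr
        exact (norm_nonneg _).trans h
    _ = (δ + δ' + δ * δ') * ‖q * q'‖ := by
        rw [norm_mul]
        ring

lemma norm_cexp_le_one {z : ℂ} (hz : z.re ≤ 0) : ‖cexp z‖ ≤ 1 := by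
  rwa [norm_exp, Real.exp_le_one_iff]

lemma norm_cexp_sub_cexp_le {a b : ℂ} (ha : a.re ≤ 0) (hb : b.re ≤ 0) :
    ‖cexp a - cexp b‖ ≤ ‖a - b‖ := by
  simpa using (convex_halfSpace_re_le 0).norm_image_sub_le_of_norm_hasDerivWithin_le (C := 1)
    (fun z _ ↦ (Complex.hasDerivAt_exp z).hasDerivWithinAt) (fun _ hz ↦ norm_cexp_le_one hz) hb ha

lemma re_mul_div_add_nonneg {z w : ℂ} (hz : 0 ≤ z.re) (hw : 0 ≤ w.re) :
    0 ≤ (z * w / (z + w)).re := by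
  have re_mul_conj : (z * w * starRingEnd ℂ (z + w)).re = normSq z * w.re + normSq w * z.re := by
    simp only [mul_re, mul_im, conj_re, conj_im, add_re, add_im, normSq_apply]
    ring
  have hre : (z * w / (z + w)).re = (normSq z * w.re + normSq w * z.re) * (normSq (z + w))⁻¹ := by
    rw [div_eq_mul_inv, inv_def, ← mul_assoc, re_mul_ofReal, re_mul_conj]
  rw [hre]
  have := normSq_nonneg
  exact mul_nonneg (add_nonneg (mul_nonneg (this z) hw) (mul_nonneg (this w) hz))
    (inv_nonneg.2 (this _))

/-- The kernel `exp (-A (x - y)² - β x² - β y²)` of two Gaussian variables with coupling `A`. -/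
noncomputable def coupledGaussian (A β : ℂ) (x y : ℝ) : ℂ :=
  cexp (-A * ((x : ℂ) - y) ^ 2 - β * (x : ℂ) ^ 2 - β * (y : ℂ) ^ 2)

/-- The double integral of `f x * f y` against `coupledGaussian A β`. With `A = W²ζ²`, `β = α` and
`f = exp (-U / 2)` it is `I(α)`; the iterated form matches the way `I(α)` is written. -/
noncomputable def weightedGaussianIntegral (A β : ℂ) (f : ℝ → ℂ) : ℂ :=
  ∫ x : ℝ, ∫ y : ℝ, coupledGaussian A β x y * (f x * f y)

section CoupledGaussian

variable {A β : ℂ}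

lemma continuous_coupledGaussian : Continuous fun p : ℝ × ℝ ↦ coupledGaussian A β p.1 p.2 := by
  unfold coupledGaussian
  fun_prop

lemma norm_coupledGaussian (x y : ℝ) :
    ‖coupledGaussian A β x y‖ =
      rexp (-β.re * x ^ 2) * rexp (-β.re * y ^ 2) * rexp (-A.re * (x - y) ^ 2) := by
  rw [coupledGaussian, norm_exp, ← Real.exp_add, ← Real.exp_add]
  congr 1
  norm_cast
  rw [sub_re, sub_re, re_mul_ofReal, re_mul_ofReal, re_mul_ofReal, neg_re]
  ring

lemma integral_coupledGaussian (hAβ : 0 < (A + β).re) (x : ℝ) :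
    ∫ y : ℝ, coupledGaussian A β x y
      = ((π : ℂ) / (A + β)) ^ (1 / 2 : ℂ) * cexp (-(β + A * β / (A + β)) * (x : ℂ) ^ 2) := by
  have h0 : A + β ≠ 0 := ne_zero_of_re_pos hAβ
  have completed := integral_cexp_quadratic (b := -(A + β)) (by rwa [neg_re, neg_lt_zero])
    (2 * A * x) (-(A + β) * (x : ℂ) ^ 2)
  rw [neg_neg] at completed
  convert! completed using 2
  · ext y
    rw [coupledGaussian]
    ring_nf
  · congr 1
    field_simp
    ring

/-- In the variable `x` left after the first integration, the exponent is the Schur complement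
`β + Aβ / (A + β)` of the quadratic form. -/
lemma weightedGaussianIntegral_one (hA : 0 ≤ A.re) (hβ : 0 < β.re) :
    weightedGaussianIntegral A β 1
      = ((π : ℂ) / (A + β)) ^ (1 / 2 : ℂ)
        * ((π : ℂ) / (β + A * β / (A + β))) ^ (1 / 2 : ℂ) := by
  have hAβ : 0 < (A + β).re := add_pos_of_nonneg_of_pos hA hβ
  have hschur : 0 < (β + A * β / (A + β)).re :=
    add_pos_of_pos_of_nonneg hβ (re_mul_div_add_nonneg hA hβ.le)
  simp only [weightedGaussianIntegral, Pi.one_apply, mul_one, integral_coupledGaussian hAβ]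
  rw [integral_const_mul, integral_gaussian_complex hschur]

lemma weightedGaussianIntegral_cexp_neg_mul_sq (c : ℂ) :
    weightedGaussianIntegral A β (fun x ↦ cexp (-c * (x : ℂ) ^ 2))
      = weightedGaussianIntegral A (β + c) 1 := by
  have absorb (x y : ℝ) : coupledGaussian A β x y * (cexp (-c * (x : ℂ) ^ 2)
      * cexp (-c * (y : ℂ) ^ 2)) = coupledGaussian A (β + c) x y := by
    rw [coupledGaussian, coupledGaussian, ← Complex.exp_add, ← Complex.exp_add]
    ring_nf
  simp only [weightedGaussianIntegral, Pi.one_apply, mul_one, absorb]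

end CoupledGaussian

section GaussianConvolution

variable {a : ℝ} {φ : ℝ → ℝ}

lemma integrable_mul_exp_neg_mul_sub_sq (ha : 0 < a) (hφ : Integrable φ) :
    Integrable (fun p : ℝ × ℝ ↦ φ p.2 * rexp (-a * (p.1 - p.2) ^ 2)) := by
  rw [Measure.volume_eq_prod]
  simpa using hφ.convolution_integrand (ContinuousLinearMap.mul ℝ ℝ) (integrable_exp_neg_mul_sq ha)

lemma integral_mul_exp_neg_mul_sub_sq (ha : 0 < a) (hφ : Integrable φ) :
    ∫ p : ℝ × ℝ, φ p.2 * rexp (-a * (p.1 - p.2) ^ 2) = √(π / a) * ∫ y, φ y := by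
  have integral_translate (y : ℝ) : ∫ x : ℝ, rexp (-a * (x - y) ^ 2) = √(π / a) := by
    rw [integral_sub_right_eq_self (fun x ↦ rexp (-a * x ^ 2)) y, integral_gaussian]
  have hint := integrable_mul_exp_neg_mul_sub_sq ha hφ
  rw [Measure.volume_eq_prod] at hint ⊢
  rw [integral_prod_symm _ hint]
  simp only [integral_const_mul, integral_translate, integral_mul_const]
  rw [mul_comm]

end GaussianConvolution

section WeightReplacement

variable {A β : ℂ} {f g : ℝ → ℂ} {h : ℝ → ℝ}

lemma exp_neg_mul_sq_le_one {b : ℝ} (hb : 0 ≤ b) (x : ℝ) : rexp (-b * x ^ 2) ≤ 1 := by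
  rw [Real.exp_le_one_iff, neg_mul, neg_nonpos]
  positivity

lemma integrable_coupledGaussian_mul (hA : 0 < A.re) (hβ : 0 < β.re)
    (hf : AEStronglyMeasurable f) (hf1 : ∀ x, ‖f x‖ ≤ 1) :
    Integrable (fun p : ℝ × ℝ ↦ coupledGaussian A β p.1 p.2 * (f p.1 * f p.2)) := by
  refine (integrable_mul_exp_neg_mul_sub_sq hA (integrable_exp_neg_mul_sq hβ)).mono'
    (continuous_coupledGaussian.aestronglyMeasurable.mul (hf.comp_fst.mul hf.comp_snd))
    (ae_of_all _ fun p ↦ ?_)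
  rw [norm_mul, norm_mul, norm_coupledGaussian]
  calc _ ≤ 1 * rexp (-β.re * p.2 ^ 2) * rexp (-A.re * (p.1 - p.2) ^ 2) * (1 * 1) := by
        gcongr
        exacts [exp_neg_mul_sq_le_one hβ.le _, hf1 _, hf1 _]
    _ = _ := by ring

lemma norm_coupledGaussian_mul_sub_le (hβ : 0 ≤ β.re) (hf1 : ∀ x, ‖f x‖ ≤ 1)
    (hg1 : ∀ x, ‖g x‖ ≤ 1) (hfg : ∀ x, ‖f x - g x‖ ≤ h x) (x y : ℝ) :
    ‖coupledGaussian A β x y * (f x * f y) - coupledGaussian A β x y * (g x * g y)‖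
      ≤ h x * rexp (-β.re * x ^ 2) * rexp (-A.re * (y - x) ^ 2)
        + h y * rexp (-β.re * y ^ 2) * rexp (-A.re * (x - y) ^ 2) := by
  have hh (t : ℝ) : 0 ≤ h t := (norm_nonneg _).trans (hfg t)
  have weight_sub : ‖f x * f y - g x * g y‖ ≤ h x + h y := by
    calc ‖f x * f y - g x * g y‖ = ‖(f x - g x) * f y + g x * (f y - g y)‖ := by ring_nf
      _ ≤ ‖f x - g x‖ * ‖f y‖ + ‖g x‖ * ‖f y - g y‖ := by
          rw [← norm_mul, ← norm_mul]
          exact norm_add_le _ _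
      _ ≤ h x * 1 + 1 * h y := by
          gcongr
          exacts [hh x, hfg x, hf1 y, hg1 x, hfg y]
      _ = h x + h y := by ring
  rw [← mul_sub, norm_mul, norm_coupledGaussian]
  calc _ ≤ rexp (-β.re * x ^ 2) * rexp (-β.re * y ^ 2) * rexp (-A.re * (x - y) ^ 2)
        * (h x + h y) := by gcongr
    _ = h x * rexp (-β.re * x ^ 2) * rexp (-A.re * (y - x) ^ 2) * rexp (-β.re * y ^ 2)
        + h y * rexp (-β.re * y ^ 2) * rexp (-A.re * (x - y) ^ 2) * rexp (-β.re * x ^ 2) := by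
        rw [← neg_sub x y, neg_sq]
        ring
    _ ≤ _ := by
        have := hh x
        have := hh y
        exact add_le_add
          (mul_le_of_le_one_right (by positivity) (exp_neg_mul_sq_le_one hβ _))
          (mul_le_of_le_one_right (by positivity) (exp_neg_mul_sq_le_one hβ _))

lemma norm_weightedGaussianIntegral_sub_le (hA : 0 < A.re) (hβ : 0 < β.re)
    (hf : AEStronglyMeasurable f) (hg : AEStronglyMeasurable g) (hf1 : ∀ x, ‖f x‖ ≤ 1)
    (hg1 : ∀ x, ‖g x‖ ≤ 1) (hfg : ∀ x, ‖f x - g x‖ ≤ h x)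
    (hh : Integrable fun x ↦ h x * rexp (-β.re * x ^ 2)) :
    ‖weightedGaussianIntegral A β f - weightedGaussianIntegral A β g‖
      ≤ 2 * √(π / A.re) * ∫ x, h x * rexp (-β.re * x ^ 2) := by
  have hF := integrable_coupledGaussian_mul hA hβ hf hf1
  have hG := integrable_coupledGaussian_mul hA hβ hg hg1
  have hint := integrable_mul_exp_neg_mul_sub_sq hA hh
  have hval := integral_mul_exp_neg_mul_sub_sq hA hh
  rw [Measure.volume_eq_prod] at hF hG hint hval
  have hval_swap := (integral_prod_swap (μ := volume) (ν := volume) fun p : ℝ × ℝ ↦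
    h p.2 * rexp (-β.re * p.2 ^ 2) * rexp (-A.re * (p.1 - p.2) ^ 2)).trans hval
  unfold weightedGaussianIntegral
  rw [← integral_prod _ hF, ← integral_prod _ hG, ← integral_sub hF hG]
  refine (norm_integral_le_of_norm_le (hint.swap.add hint) (ae_of_all _ fun p ↦
    norm_coupledGaussian_mul_sub_le hβ.le hf1 hg1 hfg p.1 p.2)).trans_eq ?_
  rw [integral_add' hint.swap hint, hval]
  simp only [Function.comp_def, hval_swap]
  ring

end WeightReplacement

lemma integral_abs_pow_mul_exp_neg_mul_sq {b : ℝ} (hb : 0 < b) (n : ℕ) :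
    ∫ x : ℝ, |x| ^ n * rexp (-b * x ^ 2)
      = b ^ (-(n + 1 : ℝ) / 2) * Real.Gamma ((n + 1 : ℝ) / 2) := by
  have half_line := integral_rpow_mul_exp_neg_mul_rpow (p := 2) (q := n) two_pos
    (neg_one_lt_zero.trans_le n.cast_nonneg) hb
  simp only [Real.rpow_natCast, Real.rpow_two] at half_line
  have := integral_comp_abs (f := fun x ↦ x ^ n * rexp (-b * x ^ 2))
  simp only [sq_abs] at this
  rw [this, half_line]
  ring

lemma integrable_abs_pow_mul_exp_neg_mul_sq {b : ℝ} (hb : 0 < b) (n : ℕ) :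
    Integrable fun x : ℝ ↦ |x| ^ n * rexp (-b * x ^ 2) := by
  refine .of_integral_ne_zero ?_
  rw [integral_abs_pow_mul_exp_neg_mul_sq hb]
  positivity

section Taylor

variable {E : Type*} [NormedAddCommGroup E] [NormedSpace ℝ E] {f : ℝ → E} {x₀ : ℝ}

lemma sub_taylorWithinEval_isBigO {n : ℕ} (hf : ContDiff ℝ (n + 1) f) :
    (fun x ↦ f x - taylorWithinEval f n Set.univ x₀ x)
      =O[nhds x₀] fun x ↦ (x - x₀) ^ (n + 1) := by
  have last_term : (fun x ↦ (((n + 1 : ℝ) * n.factorial)⁻¹ * (x - x₀) ^ (n + 1)) •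
      iteratedDerivWithin (n + 1) f Set.univ x₀) =O[nhds x₀] fun x ↦ (x - x₀) ^ (n + 1) := by
    simpa using ((Asymptotics.isBigO_refl (fun x ↦ (x - x₀) ^ (n + 1)) (nhds x₀)).const_mul_left
      ((n + 1 : ℝ) * n.factorial)⁻¹).smul (Asymptotics.isBigO_const_const
        (iteratedDerivWithin (n + 1) f Set.univ x₀) (one_ne_zero (α := ℝ)) (nhds x₀))
  have remainder := taylor_isLittleO_univ (x₀ := x₀) (n := n + 1) (mod_cast hf)
  refine (remainder.isBigO.add last_term).congr_left fun x ↦ ?_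
  rw [taylorWithinEval_succ]
  abel

lemma taylorWithinEval_two_univ (h0 : f x₀ = 0) (h1 : deriv f x₀ = 0) (x : ℝ) :
    taylorWithinEval f 2 Set.univ x₀ x = ((x - x₀) ^ 2 / 2) • deriv (deriv f) x₀ := by
  rw [taylor_within_apply]
  simp [Finset.sum_range_succ, iteratedDerivWithin_univ, iteratedDeriv_succ, h0, h1, div_eq_inv_mul]

end Taylor

lemma exists_norm_le_mul_norm_pow {E F : Type*} [SeminormedAddCommGroup E]
    [SeminormedAddCommGroup F] {f : E → F} {B : ℝ} {n : ℕ} (hB : ∀ x, ‖f x‖ ≤ B)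
    (hf : f =O[nhds 0] fun x ↦ ‖x‖ ^ n) : ∃ M, 0 < M ∧ ∀ x, ‖f x‖ ≤ M * ‖x‖ ^ n := by
  obtain ⟨M, hM, hnear⟩ := hf.exists_pos
  obtain ⟨r, hr, hball⟩ := Metric.eventually_nhds_iff.1 hnear.bound
  have hB0 : 0 ≤ B := (norm_nonneg _).trans (hB 0)
  refine ⟨M + B / r ^ n, by positivity, fun x ↦ ?_⟩
  rcases lt_or_ge ‖x‖ r with hx | hx
  · calc ‖f x‖ ≤ M * ‖x‖ ^ n := by simpa using hball (by simpa using hx)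
      _ ≤ (M + B / r ^ n) * ‖x‖ ^ n := by
        gcongr
        exact le_add_of_nonneg_right (by positivity)
  · calc ‖f x‖ ≤ B / r ^ n * r ^ n := by
          rw [div_mul_cancel₀ _ (by positivity)]
          exact hB x
      _ ≤ (M + B / r ^ n) * ‖x‖ ^ n := by
        gcongr
        exact le_add_of_nonneg_left hM.le

lemma two_mul_le_re_deriv_deriv {U : ℝ → ℂ} {c x₀ : ℝ} (hU : ContDiff ℝ 2 U) (h0 : U x₀ = 0)
    (h1 : deriv U x₀ = 0) (hc : ∀ᶠ x in nhds x₀, c * (x - x₀) ^ 2 ≤ (U x).re) :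
    2 * c ≤ (deriv (deriv U) x₀).re := by
  have remainder := (taylor_tendsto convex_univ (Set.mem_univ x₀) (n := 2) hU.contDiffOn).mono_left
    (nhdsWithin_mono x₀ (Set.subset_univ {x₀}ᶜ))
  have re_remainder := (continuous_re.tendsto 0).comp remainder
  have lower : ∀ᶠ x in nhdsWithin x₀ {x₀}ᶜ, c - (deriv (deriv U) x₀).re / 2
      ≤ (((x - x₀) ^ 2)⁻¹ • (U x - taylorWithinEval U 2 Set.univ x₀ x)).re := by
    filter_upwards [nhdsWithin_le_nhds hc, self_mem_nhdsWithin] with x hx hne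
    have hpos : 0 < (x - x₀) ^ 2 := by
      have := sub_ne_zero.2 hne
      positivity
    rw [taylorWithinEval_two_univ h0 h1, smul_re, sub_re, smul_re, smul_eq_mul, smul_eq_mul,
      ← div_eq_inv_mul, le_div_iff₀ hpos]
    linarith
  have := ge_of_tendsto re_remainder lower
  rw [zero_re] at this
  linarith

lemma re_deriv_deriv_nonneg {U : ℝ → ℂ} {x₀ : ℝ} (hU : ContDiff ℝ 2 U) (h0 : U x₀ = 0)
    (h1 : deriv U x₀ = 0) (hre : ∀ x, 0 ≤ (U x).re) : 0 ≤ (deriv (deriv U) x₀).re := by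
  simpa using two_mul_le_re_deriv_deriv (c := 0) hU h0 h1 (.of_forall fun x ↦ by simpa using hre x)

lemma deriv_deriv_ne_zero_of_mul_min_one_sq_le_re {U : ℝ → ℂ} {k : ℝ} (hk : 0 < k)
    (hU : ContDiff ℝ 2 U) (h0 : U 0 = 0) (h1 : deriv U 0 = 0)
    (h : ∀ x, k * min 1 (x ^ 2) ≤ (U x).re) : deriv (deriv U) 0 ≠ 0 := by
  have near_zero : ∀ᶠ x in nhds (0 : ℝ), k * (x - 0) ^ 2 ≤ (U x).re := by
    filter_upwards [Metric.ball_mem_nhds (0 : ℝ) one_pos] with x hx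
    have hx1 : x ^ 2 ≤ 1 := (sq_le_one_iff_abs_le_one x).2 (mem_ball_zero_iff.1 hx).le
    simpa [min_eq_right hx1] using h x
  exact ne_zero_of_re_pos ((mul_pos two_pos hk).trans_le
    (two_mul_le_re_deriv_deriv hU h0 h1 near_zero))

/-- The leading term `√(π / (A + α)) √(π / (2α))` of `weightedGaussianIntegral A α f` for large `A`,
with principal square roots. -/
noncomputable def saddlePointValue (A : ℂ) (α : ℝ) : ℂ :=
  ((π : ℂ) / (A + α)) ^ (1 / 2 : ℂ) * ((π : ℂ) / (2 * α)) ^ (1 / 2 : ℂ)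

section SaddlePoint

variable {A c : ℂ} {α : ℝ}

lemma norm_saddlePointValue (hα : 0 ≤ α) :
    ‖saddlePointValue A α‖ = √(π / ‖A + α‖) * √(π / (2 * α)) := by
  rw [saddlePointValue, norm_mul, norm_cpow_half_pi_div, norm_cpow_half_pi_div, norm_mul,
    norm_real, Real.norm_of_nonneg hα, Complex.norm_ofNat]

lemma integral_exp_eq_weightedGaussianIntegral (U : ℝ → ℂ) :
    ∫ x : ℝ, ∫ y : ℝ, cexp (-A * ((x : ℂ) - y) ^ 2 - U x / 2 - c * (x : ℂ) ^ 2 - U y / 2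
        - c * (y : ℂ) ^ 2)
      = weightedGaussianIntegral A c fun x ↦ cexp (-(U x / 2)) := by
  have split (x y : ℝ) : cexp (-A * ((x : ℂ) - y) ^ 2 - U x / 2 - c * (x : ℂ) ^ 2 - U y / 2
      - c * (y : ℂ) ^ 2) = coupledGaussian A c x y * (cexp (-(U x / 2)) * cexp (-(U y / 2))) := by
    rw [coupledGaussian, ← Complex.exp_add, ← Complex.exp_add]
    ring_nf
  simp only [weightedGaussianIntegral, split]

lemma norm_weightedGaussianIntegral_sub_le_of_norm_sub_le_pow {f g : ℝ → ℂ} {M : ℝ} {n : ℕ}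
    (hA : 0 < A.re) (hα : 0 < α) (hf : AEStronglyMeasurable f) (hg : AEStronglyMeasurable g)
    (hf1 : ∀ x, ‖f x‖ ≤ 1) (hg1 : ∀ x, ‖g x‖ ≤ 1) (hfg : ∀ x, ‖f x - g x‖ ≤ M * |x| ^ n) :
    ‖weightedGaussianIntegral A α f - weightedGaussianIntegral A α g‖
      ≤ 2 * M * Real.Gamma ((n + 1 : ℝ) / 2) * √(‖A + α‖ / A.re) * α ^ (-(n : ℝ) / 2)
        * ‖saddlePointValue A α‖ := by
  have hM : 0 ≤ M := by simpa using (norm_nonneg _).trans (hfg 1)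
  have hAα : A + α ≠ 0 := ne_zero_of_re_pos (by simpa using add_pos hA hα)
  have moment := integral_abs_pow_mul_exp_neg_mul_sq hα n
  have hint := (integrable_abs_pow_mul_exp_neg_mul_sq hα n).const_mul M
  simp only [← mul_assoc] at hint
  have sqrt_split : √(π / A.re) = √(‖A + α‖ / A.re) * √(π / ‖A + α‖) := by
    rw [← Real.sqrt_mul (by positivity)]
    congr 1
    field_simp
  have rpow_split : α ^ (-(n + 1 : ℝ) / 2) ≤ α ^ (-(n : ℝ) / 2) * √(π / (2 * α)) := by
    rw [show -(n + 1 : ℝ) / 2 = -(n : ℝ) / 2 + -(1 / 2) by ring, Real.rpow_add hα,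
      Real.rpow_neg hα.le, ← Real.sqrt_eq_rpow, ← Real.sqrt_inv]
    gcongr
    rw [inv_eq_one_div, div_le_div_iff₀ hα (by positivity)]
    nlinarith [two_le_pi]
  calc _ ≤ 2 * √(π / A.re) * ∫ x, M * |x| ^ n * rexp (-α * x ^ 2) := by
        simpa using norm_weightedGaussianIntegral_sub_le (β := α) hA (by simpa) hf hg hf1 hg1 hfg
          (by simpa using hint)
    _ = 2 * M * Real.Gamma ((n + 1 : ℝ) / 2) * √(‖A + α‖ / A.re) * √(π / ‖A + α‖)
        * α ^ (-(n + 1 : ℝ) / 2) := by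
        simp only [mul_assoc M, integral_const_mul, moment, sqrt_split]
        ring
    _ ≤ 2 * M * Real.Gamma ((n + 1 : ℝ) / 2) * √(‖A + α‖ / A.re) * √(π / ‖A + α‖)
        * (α ^ (-(n : ℝ) / 2) * √(π / (2 * α))) := by gcongr
    _ = _ := by
        rw [norm_saddlePointValue hα.le]
        ring

/-- With `β = α + c`, the Schur complement satisfies
`β + Aβ / (A + β) - 2α = (2Ac - α² + c²) / (A + β)`. -/
lemma norm_weightedGaussianIntegral_one_sub_le (hA : 0 < A.re) (hα : 0 < α) (hc : 0 ≤ c.re) :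
    ‖weightedGaussianIntegral A (α + c) 1 - saddlePointValue A α‖
      ≤ (‖c‖ / A.re + (‖(α : ℂ) ^ 2 - 2 * A * c‖ + ‖c‖ ^ 2) / (A.re * α)
          + ‖c‖ / A.re * ((‖(α : ℂ) ^ 2 - 2 * A * c‖ + ‖c‖ ^ 2) / (A.re * α)))
        * ‖saddlePointValue A α‖ := by
  set β : ℂ := α + c with hβ
  have hαβ : α ≤ β.re := by simpa [hβ] using hc
  have hβ0 : 0 < β.re := hα.trans_le hαβ
  have hAβ : A.re ≤ (A + β).re := by simpa using hβ0.le
  have hAβ0 : A + β ≠ 0 := ne_zero_of_re_pos (hA.trans_le hAβ)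
  have hAα : 0 < (A + α).re := by simpa using add_pos hA hα
  have schur_re : α ≤ (β + A * β / (A + β)).re := by
    rw [add_re]
    exact le_add_of_le_of_nonneg hαβ (re_mul_div_add_nonneg hA.le hβ0.le)
  have schur_sub : β + A * β / (A + β) - 2 * α
      = -((α : ℂ) ^ 2 - 2 * A * c - c ^ 2) / (A + β) := by
    field_simp
    rw [hβ]
    ring
  have first := norm_cpow_half_pi_div_sub_le (hA.trans_le hAβ) hAα
  have second := norm_cpow_half_pi_div_sub_le (w := 2 * α) (hα.trans_le schur_re) (by simpa)
  rw [add_sub_add_left_eq_sub, hβ, add_sub_cancel_left, ← hβ] at first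
  rw [schur_sub, norm_div, norm_neg, div_div] at second
  rw [weightedGaussianIntegral_one hA.le hβ0, saddlePointValue]
  refine norm_mul_sub_mul_le_of_norm_sub_le_mul (first.trans ?_) (second.trans ?_)
  · gcongr
    exact hAβ.trans (re_le_norm _)
  · gcongr
    · rw [← norm_pow]
      exact norm_sub_le _ _
    · exact hAβ.trans (re_le_norm _)
    · exact schur_re.trans (re_le_norm _)

lemma norm_weightedGaussianIntegral_sub_saddlePointValue_le {f : ℝ → ℂ} {M : ℝ} {n : ℕ}
    (hA : 0 < A.re) (hα : 0 < α) (hc : 0 ≤ c.re) (hf : AEStronglyMeasurable f)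
    (hf1 : ∀ x, ‖f x‖ ≤ 1) (hfc : ∀ x : ℝ, ‖f x - cexp (-c * (x : ℂ) ^ 2)‖ ≤ M * |x| ^ n) :
    ‖weightedGaussianIntegral A α f - saddlePointValue A α‖
      ≤ (2 * M * Real.Gamma ((n + 1 : ℝ) / 2) * √(‖A + α‖ / A.re) * α ^ (-(n : ℝ) / 2)
          + (‖c‖ / A.re + (‖(α : ℂ) ^ 2 - 2 * A * c‖ + ‖c‖ ^ 2) / (A.re * α)
            + ‖c‖ / A.re * ((‖(α : ℂ) ^ 2 - 2 * A * c‖ + ‖c‖ ^ 2) / (A.re * α))))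
        * ‖saddlePointValue A α‖ := by
  have quadratic_le_one (x : ℝ) : ‖cexp (-c * (x : ℂ) ^ 2)‖ ≤ 1 := by
    refine norm_cexp_le_one ?_
    rw [← ofReal_pow, re_mul_ofReal, neg_re, neg_mul, neg_nonpos]
    positivity
  have weight_error := norm_weightedGaussianIntegral_sub_le_of_norm_sub_le_pow hA hα hf
    (by fun_prop : Continuous fun x : ℝ ↦ cexp (-c * (x : ℂ) ^ 2)).aestronglyMeasurable
    hf1 quadratic_le_one hfc
  rw [weightedGaussianIntegral_cexp_neg_mul_sq] at weight_error
  rw [add_mul]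
  exact (norm_sub_le_norm_sub_add_norm_sub _ _ _).trans
    (add_le_add weight_error (norm_weightedGaussianIntegral_one_sub_le hA hα hc))

end SaddlePoint

lemma exists_norm_cexp_neg_half_sub_gaussian_le {U : ℝ → ℂ} (hU : ContDiff ℝ 3 U) (h0 : U 0 = 0)
    (h1 : deriv U 0 = 0) (hre : ∀ x, 0 ≤ (U x).re) :
    ∃ M, 0 < M ∧ ∀ x : ℝ,
      ‖cexp (-(U x / 2)) - cexp (-(deriv (deriv U) 0 / 4) * (x : ℂ) ^ 2)‖ ≤ M * |x| ^ 3 := by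
  have hU2 : 0 ≤ (deriv (deriv U) 0 / 4).re := by
    rw [div_ofNat_re]
    exact div_nonneg (re_deriv_deriv_nonneg (hU.of_le (by norm_num)) h0 h1 hre) four_pos.le
  have re_exponent (x : ℝ) : (-(U x / 2)).re ≤ 0 := by
    simpa using div_nonneg (hre x) two_pos.le
  have re_quadratic (x : ℝ) : (-(deriv (deriv U) 0 / 4) * (x : ℂ) ^ 2).re ≤ 0 := by
    rw [← ofReal_pow, re_mul_ofReal, neg_re, neg_mul, neg_nonpos]
    exact mul_nonneg hU2 (sq_nonneg x)
  refine exists_norm_le_mul_norm_pow (B := 1 + 1) (fun x ↦ ?_) ?_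
  · exact (norm_sub_le _ _).trans
      (add_le_add (norm_cexp_le_one (re_exponent x)) (norm_cexp_le_one (re_quadratic x)))
  · have remainder := ((sub_taylorWithinEval_isBigO (x₀ := 0) (n := 2)
      (mod_cast hU)).const_mul_left (-(1 / 2) : ℂ)).trans
      (.of_norm_le (g := fun x ↦ ‖x‖ ^ 3) fun x ↦ by simp)
    refine .trans (.of_norm_le fun x ↦ ?_) remainder.norm_left
    refine (norm_cexp_sub_cexp_le (re_exponent x) (re_quadratic x)).trans_eq ?_
    rw [taylorWithinEval_two_univ h0 h1, real_smul]
    push_cast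
    ring_nf

section Scaling

variable {C W α : ℝ} {v : ℂ}

lemma rpow_three_halves (hW : 0 ≤ W) : W ^ (3 / 2 : ℝ) = W * √W := by
  rw [show (3 / 2 : ℝ) = 1 + 1 / 2 by norm_num, Real.rpow_add' hW (by norm_num), Real.rpow_one,
    ← Real.sqrt_eq_rpow]

lemma sqrt_half_mul_le_of_norm_sq_sub_le (hW : 0 ≤ W) (hα : 0 ≤ α) (hCW : 2 * C ≤ ‖v‖ * √W)
    (h : ‖(α : ℂ) ^ 2 - (W : ℂ) ^ 2 * v‖ ≤ C * W ^ (3 / 2 : ℝ)) : √(‖v‖ / 2) * W ≤ α := by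
  have lower : W ^ 2 * ‖v‖ - α ^ 2 ≤ C * W ^ (3 / 2 : ℝ) := by
    rw [norm_sub_rev] at h
    simpa using (norm_sub_norm_le _ _).trans h
  have absorb : 2 * (C * W ^ (3 / 2 : ℝ)) ≤ W ^ 2 * ‖v‖ :=
    calc 2 * (C * W ^ (3 / 2 : ℝ)) = W * (2 * C) * √W := by
          rw [rpow_three_halves hW]
          ring
      _ ≤ W * (‖v‖ * √W) * √W := by gcongr
      _ = W ^ 2 * ‖v‖ := by
          rw [mul_assoc, mul_assoc, Real.mul_self_sqrt hW]
          ring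
  refine le_of_sq_le_sq ?_ hα
  rw [mul_pow, Real.sq_sqrt (by positivity)]
  linarith

lemma le_sqrt_mul_of_norm_sq_sub_le (hC : 0 ≤ C) (hW : 1 ≤ W)
    (h : ‖(α : ℂ) ^ 2 - (W : ℂ) ^ 2 * v‖ ≤ C * W ^ (3 / 2 : ℝ)) : α ≤ √(‖v‖ + C) * W := by
  have upper : α ^ 2 - W ^ 2 * ‖v‖ ≤ C * W ^ (3 / 2 : ℝ) := by
    simpa using (norm_sub_norm_le _ _).trans h
  have rpow_le : W ^ (3 / 2 : ℝ) ≤ W ^ 2 := by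
    rw [← Real.rpow_two]
    exact Real.rpow_le_rpow_of_exponent_le hW (by norm_num)
  refine le_of_sq_le_sq ?_ (by positivity)
  rw [mul_pow, Real.sq_sqrt (by positivity)]
  linarith [mul_le_mul_of_nonneg_left rpow_le hC]

end Scaling

section Asymptotics

variable {C κ L W α : ℝ} {c z : ℂ}

lemma re_ofReal_sq_mul (W : ℝ) (z : ℂ) : ((W : ℂ) ^ 2 * z).re = W ^ 2 * z.re := by
  rw [← ofReal_pow, re_ofReal_mul]

lemma sqrt_norm_div_mul_rpow_le (hz : 0 < z.re) (hκ : 0 < κ) (hW : 1 ≤ W) (hκα : κ * W ≤ α)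
    (hαL : α ≤ L * W) :
    √(‖(W : ℂ) ^ 2 * z + α‖ / ((W : ℂ) ^ 2 * z).re) * α ^ (-(3 : ℝ) / 2)
      ≤ √((‖z‖ + L) / z.re) * κ ^ (-(3 : ℝ) / 2) * W ^ (-(3 : ℝ) / 2) := by
  have hW0 : 0 < W := one_pos.trans_le hW
  have hα : 0 < α := (mul_pos hκ hW0).trans_le hκα
  have hL : 0 ≤ L := (pos_of_mul_pos_left (hα.trans_le hαL) hW0.le).le
  have norm_le : ‖(W : ℂ) ^ 2 * z + α‖ ≤ W ^ 2 * (‖z‖ + L) :=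
    calc ‖(W : ℂ) ^ 2 * z + α‖ ≤ W ^ 2 * ‖z‖ + α := by
          refine (norm_add_le _ _).trans_eq ?_
          rw [norm_mul, norm_pow, norm_real, norm_real, Real.norm_of_nonneg hW0.le,
            Real.norm_of_nonneg hα.le]
      _ ≤ W ^ 2 * ‖z‖ + L * W ^ 2 := by
          gcongr
          exact hαL.trans (by gcongr; exact le_self_pow₀ hW two_ne_zero)
      _ = W ^ 2 * (‖z‖ + L) := by ring
  have ratio_le : ‖(W : ℂ) ^ 2 * z + α‖ / ((W : ℂ) ^ 2 * z).re ≤ (‖z‖ + L) / z.re := by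
    rw [re_ofReal_sq_mul, ← mul_div_mul_left (‖z‖ + L) z.re (pow_ne_zero 2 hW0.ne')]
    gcongr
  rw [mul_assoc, ← Real.mul_rpow hκ.le hW0.le]
  exact mul_le_mul (Real.sqrt_le_sqrt ratio_le)
    (Real.rpow_le_rpow_of_nonpos (by positivity) hκα (by norm_num)) (by positivity) (by positivity)

lemma norm_div_re_sq_mul_le (hz : 0 < z.re) (hW : 1 ≤ W) :
    ‖c‖ / ((W : ℂ) ^ 2 * z).re ≤ ‖c‖ / z.re * W ^ (-(3 : ℝ) / 2) := by
  have rpow_le : W ^ (-(2 : ℝ)) ≤ W ^ (-(3 : ℝ) / 2) :=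
    Real.rpow_le_rpow_of_exponent_le hW (by norm_num)
  have hW0 : 0 < W := one_pos.trans_le hW
  calc ‖c‖ / ((W : ℂ) ^ 2 * z).re = ‖c‖ / z.re * W ^ (-(2 : ℝ)) := by
        rw [re_ofReal_sq_mul, Real.rpow_neg hW0.le, Real.rpow_two]
        field_simp
    _ ≤ _ := by gcongr

lemma norm_sub_add_sq_div_le (hz : 0 < z.re) (hκ : 0 < κ) (hW : 1 ≤ W) (hκα : κ * W ≤ α)
    (h : ‖(α : ℂ) ^ 2 - 2 * ((W : ℂ) ^ 2 * z) * c‖ ≤ C * W ^ (3 / 2 : ℝ)) :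
    (‖(α : ℂ) ^ 2 - 2 * ((W : ℂ) ^ 2 * z) * c‖ + ‖c‖ ^ 2) / (((W : ℂ) ^ 2 * z).re * α)
      ≤ (C + ‖c‖ ^ 2) / (z.re * κ) * W ^ (-(3 : ℝ) / 2) := by
  have hW0 : 0 < W := one_pos.trans_le hW
  have one_le : 1 ≤ W ^ (3 / 2 : ℝ) := Real.one_le_rpow hW (by norm_num)
  have hCW : 0 ≤ C * W ^ (3 / 2 : ℝ) := (norm_nonneg _).trans h
  have cube : W ^ (-(3 : ℝ) / 2) * W ^ 3 = W ^ (3 / 2 : ℝ) := by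
    rw [← Real.rpow_natCast, ← Real.rpow_add hW0]
    norm_num
  rw [re_ofReal_sq_mul]
  calc _ ≤ (C * W ^ (3 / 2 : ℝ) + ‖c‖ ^ 2 * W ^ (3 / 2 : ℝ)) / (W ^ 2 * z.re * (κ * W)) := by
        gcongr
        exact le_mul_of_one_le_right (by positivity) one_le
    _ = (C + ‖c‖ ^ 2) / (z.re * κ) * W ^ (-(3 : ℝ) / 2) := by
        rw [← add_mul, ← cube]
        field_simp

lemma norm_weightedGaussianIntegral_sub_saddlePointValue_le_of_scale {f : ℝ → ℂ} {M : ℝ}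
    (hz : 0 < z.re) (hc : 0 ≤ c.re) (hf : AEStronglyMeasurable f) (hf1 : ∀ x, ‖f x‖ ≤ 1)
    (hfc : ∀ x : ℝ, ‖f x - cexp (-c * (x : ℂ) ^ 2)‖ ≤ M * |x| ^ 3) (hκ : 0 < κ) (hW : 1 ≤ W)
    (hκα : κ * W ≤ α) (hαL : α ≤ L * W)
    (h : ‖(α : ℂ) ^ 2 - 2 * ((W : ℂ) ^ 2 * z) * c‖ ≤ C * W ^ (3 / 2 : ℝ)) :
    ‖weightedGaussianIntegral ((W : ℂ) ^ 2 * z) α f - saddlePointValue ((W : ℂ) ^ 2 * z) α‖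
      ≤ (2 * M * (√((‖z‖ + L) / z.re) * κ ^ (-(3 : ℝ) / 2))
          + (‖c‖ / z.re + (C + ‖c‖ ^ 2) / (z.re * κ)
            + ‖c‖ / z.re * ((C + ‖c‖ ^ 2) / (z.re * κ))))
        * W ^ (-(3 : ℝ) / 2) * ‖saddlePointValue ((W : ℂ) ^ 2 * z) α‖ := by
  have hW0 : 0 < W := one_pos.trans_le hW
  have hα : 0 < α := (mul_pos hκ hW0).trans_le hκα
  have hM : 0 ≤ M := by simpa using (norm_nonneg _).trans (hfc 1)
  have hA : 0 < ((W : ℂ) ^ 2 * z).re := by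
    rw [re_ofReal_sq_mul]
    positivity
  have rpow_le_one : W ^ (-(3 : ℝ) / 2) ≤ 1 := Real.rpow_le_one_of_one_le_of_nonpos hW (by norm_num)
  have weight := sqrt_norm_div_mul_rpow_le hz hκ hW hκα hαL
  have first := norm_div_re_sq_mul_le (c := c) hz hW
  have second := norm_sub_add_sq_div_le hz hκ hW hκα h
  have cross := mul_le_mul (first.trans (mul_le_of_le_one_right (by positivity) rpow_le_one)) second
    (by positivity) (by positivity)
  refine (norm_weightedGaussianIntegral_sub_saddlePointValue_le hA hα hc hf hf1 hfc).trans ?_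
  rw [show ((3 : ℕ) + 1 : ℝ) / 2 = 2 by norm_num, Real.Gamma_two, Nat.cast_ofNat]
  gcongr
  linarith [mul_le_mul_of_nonneg_left weight hM]

lemma exists_norm_weightedGaussianIntegral_sub_saddlePointValue_le {f : ℝ → ℂ} {M : ℝ}
    (hC : 0 ≤ C) (hM : 0 < M) (hz : 0 < z.re) (hc : 0 ≤ c.re) (hc0 : c ≠ 0)
    (hf : AEStronglyMeasurable f) (hf1 : ∀ x, ‖f x‖ ≤ 1)
    (hfc : ∀ x : ℝ, ‖f x - cexp (-c * (x : ℂ) ^ 2)‖ ≤ M * |x| ^ 3) :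
    ∃ C' : ℝ, 0 < C' ∧ ∃ W₀ : ℝ, 1 ≤ W₀ ∧ ∀ W : ℝ, W₀ ≤ W → ∀ α : ℝ, 0 < α →
      ‖(α : ℂ) ^ 2 - 2 * ((W : ℂ) ^ 2 * z) * c‖ ≤ C * W ^ (3 / 2 : ℝ) →
      ‖weightedGaussianIntegral ((W : ℂ) ^ 2 * z) α f - saddlePointValue ((W : ℂ) ^ 2 * z) α‖
        ≤ C' * W ^ (-(3 : ℝ) / 2) * ‖saddlePointValue ((W : ℂ) ^ 2 * z) α‖ := by
  set v : ℂ := 2 * z * c with hv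
  have hz0 : z ≠ 0 := ne_zero_of_re_pos hz
  have hv0 : 0 < ‖v‖ := norm_pos_iff.2 (mul_ne_zero (mul_ne_zero two_ne_zero hz0) hc0)
  have hκ : 0 < √(‖v‖ / 2) := Real.sqrt_pos.2 (half_pos hv0)
  refine ⟨_, ?_, max 1 ((2 * C / ‖v‖) ^ 2), le_max_left _ _, fun W hW α hα hαW ↦
    norm_weightedGaussianIntegral_sub_saddlePointValue_le_of_scale (κ := √(‖v‖ / 2))
      (L := √(‖v‖ + C)) hz hc hf hf1 hfc hκ ((le_max_left _ _).trans hW) ?_ ?_ hαW⟩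
  · positivity
  all_goals
    have hW1 : 1 ≤ W := (le_max_left _ _).trans hW
    have hscale : ‖(α : ℂ) ^ 2 - (W : ℂ) ^ 2 * v‖ ≤ C * W ^ (3 / 2 : ℝ) := by
      convert! hαW using 3
      rw [hv]
      ring
  · have hCW : 2 * C ≤ ‖v‖ * √W := by
      rw [← div_le_iff₀' hv0]
      exact Real.le_sqrt_of_sq_le ((le_max_right _ _).trans hW)
    exact sqrt_half_mul_le_of_norm_sq_sub_le (one_pos.le.trans hW1) hα.le hCW hscale
  · exact le_sqrt_mul_of_norm_sq_sub_le hC hW1 hscale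

end Asymptotics

theorem stmt_12_general {C : ℝ} {ζ : ℂ} {U : ℝ → ℂ} (hC : 0 ≤ C) (hζ : 0 < (ζ ^ 2).re)
    (hU : ContDiff ℝ 3 U) (hU0 : U 0 = 0) (hU1 : deriv U 0 = 0) (hUre : ∀ x, 0 ≤ (U x).re)
    (hU2 : deriv (deriv U) 0 ≠ 0) :
    ∃ C' : ℝ, 0 < C' ∧ ∃ W₀ : ℝ, 1 ≤ W₀ ∧ ∀ W : ℝ, W₀ ≤ W → ∀ α : ℝ, 0 < α →
      ‖(α : ℂ) ^ 2 - (W : ℂ) ^ 2 * ζ ^ 2 * deriv (deriv U) 0 / 2‖ ≤ C * W ^ ((3 : ℝ) / 2) →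
      ‖(∫ x : ℝ, ∫ y : ℝ,
          cexp (-(W : ℂ) ^ 2 * ζ ^ 2 * ((x : ℂ) - y) ^ 2
            - U x / 2 - α * (x : ℂ) ^ 2 - U y / 2 - α * (y : ℂ) ^ 2))
        - saddlePointValue ((W : ℂ) ^ 2 * ζ ^ 2) α‖
      ≤ C' * W ^ (-(3 : ℝ) / 2) * ‖saddlePointValue ((W : ℂ) ^ 2 * ζ ^ 2) α‖ := by
  have hU2re : 0 ≤ (deriv (deriv U) 0 / 4).re := by
    rw [div_ofNat_re]
    exact div_nonneg (re_deriv_deriv_nonneg (hU.of_le (by norm_num)) hU0 hU1 hUre) four_pos.le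
  obtain ⟨M, hM, hUM⟩ := exists_norm_cexp_neg_half_sub_gaussian_le hU hU0 hU1 hUre
  have hUcont : Continuous fun x ↦ cexp (-(U x / 2)) := by
    have := hU.continuous
    fun_prop
  obtain ⟨C', hC', W₀, hW₀, hasymp⟩ :=
    exists_norm_weightedGaussianIntegral_sub_saddlePointValue_le hC hM hζ hU2re
      (div_ne_zero hU2 (by norm_num)) hUcont.aestronglyMeasurable
      (fun x ↦ norm_cexp_le_one (by simpa using div_nonneg (hUre x) two_pos.le)) hUM
  refine ⟨C', hC', W₀, hW₀, fun W hW α hα hαW ↦ ?_⟩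
  simp only [neg_mul ((W : ℂ) ^ 2), integral_exp_eq_weightedGaussianIntegral]
  refine hasymp W hW α hα ?_
  convert! hαW using 3
  ring

/-- saddle point asymptotics of the double integral `I(α)`:
for `α > 0` with `|α² − W²ζ²U''(0)/2| ≤ C·W^{3/2}`,
`I(α) = (1 + O(W^{−3/2+ε}))·√(π/(W²ζ²+α))·√(π/(2α))`. -/
theorem stmt_12 :
    ∀ (C : ℝ) (ζ : ℂ) (U : ℝ → ℂ), 1 ≤ C → ‖ζ‖ = 1 → 0 < (ζ^2).re →
    ContDiff ℝ (⊤ : ℕ∞) U → U 0 = 0 → deriv U 0 = 0 →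
    (∀ x : ℝ, (1/C) * min 1 (x^2) ≤ (U x).re) →
    ∀ ε : ℝ, 0 < ε →
    ∃ C' : ℝ, 0 < C' ∧ ∃ W₀ : ℝ, 0 < W₀ ∧
    ∀ W : ℝ, W₀ ≤ W →
    ∀ α : ℝ, 0 < α →
      ‖((α : ℂ))^2 - (W : ℂ)^2 * ζ^2 * deriv (deriv U) 0 / 2‖ ≤ C * W ^ ((3:ℝ)/2) →
      ‖(∫ x : ℝ, ∫ y : ℝ,
          Complex.exp (-(W : ℂ)^2 * ζ^2 * ((x : ℂ) - (y : ℂ))^2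
            - U x / 2 - (α : ℂ) * (x : ℂ)^2 - U y / 2 - (α : ℂ) * (y : ℂ)^2))
        - ((π : ℂ) / ((W : ℂ)^2 * ζ^2 + (α : ℂ))) ^ (1/2 : ℂ)
          * ((π : ℂ) / (2 * (α : ℂ))) ^ (1/2 : ℂ)‖
      ≤ C' * W ^ (-(3:ℝ)/2 + ε) *
          ‖((π : ℂ) / ((W : ℂ)^2 * ζ^2 + (α : ℂ))) ^ (1/2 : ℂ)
            * ((π : ℂ) / (2 * (α : ℂ))) ^ (1/2 : ℂ)‖ := by
  intro C ζ U hC _ hζ hU hU0 hU1 hU3 ε hε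
  have hC0 : 0 < C := one_pos.trans_le hC
  have hU2 := deriv_deriv_ne_zero_of_mul_min_one_sq_le_re (one_div_pos.2 hC0)
    (mod_cast contDiff_infty.1 hU 2) hU0 hU1 hU3
  obtain ⟨C', hC', W₀, hW₀, hasymp⟩ := stmt_12_general hC0.le hζ (mod_cast contDiff_infty.1 hU 3)
    hU0 hU1 (fun x ↦ le_trans (by positivity) (hU3 x)) hU2
  refine ⟨C', hC', W₀, one_pos.trans_le hW₀, fun W hW α hα hαW ↦
    (hasymp W hW α hα hαW).trans ?_⟩
  have hW1 : 1 ≤ W := hW₀.trans hW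
  rw [saddlePointValue]
  gcongr
  exact le_add_of_nonneg_right hε.le
end

section
/- For every ε > 0 there exist constants C', W₀ > 0 depending only on ε, C, c, γ such that for all W ≥ W₀, ‖(K − K̃)·g_α‖_{L²(ℝ)} ≤ C'·W^{−3/2+ε}·|μ|. -/
open MeasureTheory Complex Real
open scoped ComplexInnerProductSpace

/-!
`K̃` is the operator `K` with the potential `U` replaced by its quadratic Taylor polynomial `V`.
Since `U(0) = 0` and `|U'| ≤ C` as long as `|U| ≤ 1`, the extension of `U` stays bounded by `1` on a
disc whose radius depends only on `C` and `c`; Cauchy's estimates there give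
`|exp(-U/2) - exp(-V/2)| ≲ |x|³` near `0`, and `Re U, Re V ≥ 0` extends this to the whole line.
Comparing (U3) with the Taylor expansion as `x → 0` bounds `ζ²U''(0)` and `Re ζ²` from below, so
that `α` is comparable to `W` and `W² Re ζ²` to `W²`.

Against `g_α` the weight `|x|³ + |y|³` costs a factor `α^(-3/2) ~ W^(-3/2)`, part of the Gaussian
decay in `y` turns into decay in `x`, and what remains is the Gaussian integral of
`exp(-W² Re ζ² (x - y)² / 4)`, of order `1/W ≤ |μ|`.
-/

open Filter Metric Topology
open scoped Nat ComplexConjugate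

section ComplexAnalysis

variable {E : Type*} [NormedAddCommGroup E] [NormedSpace ℂ E]

-- A continuity argument: along each radius `‖f‖` lies below the linear barrier `t ↦ t * B`, which
-- is steeper than `‖f‖` can be as long as `‖f‖ ≤ B`.
lemma norm_le_of_norm_deriv_le_of_norm_le {f : ℂ → E} {B L r : ℝ} (hB : 0 ≤ B) (hLr : L * r < B)
    (h0 : f 0 = 0) (hf : ∀ z, ‖z‖ ≤ r → DifferentiableAt ℂ f z)
    (hf' : ∀ z, ‖z‖ ≤ r → ‖f z‖ ≤ B → ‖deriv f z‖ ≤ L) {z : ℂ} (hz : ‖z‖ ≤ r) :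
    ‖f z‖ ≤ B := by
  have hray : ∀ t ∈ Set.Icc (0 : ℝ) 1, ‖t * z‖ ≤ r := fun t ht ↦ by
    rw [norm_mul, norm_real, Real.norm_of_nonneg ht.1]
    exact (mul_le_of_le_one_left (norm_nonneg z) ht.2).trans hz
  have hderiv : ∀ t ∈ Set.Icc (0 : ℝ) 1,
      HasDerivAt (fun t : ℝ ↦ f (t * z)) (z • deriv f (t * z)) t := fun t ht ↦ by
    have hmul : HasDerivAt (fun s : ℝ ↦ (s : ℂ) * z) z t := by
      simpa using (ofRealCLM.hasDerivAt (x := t)).mul_const z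
    exact (hf _ (hray t ht)).hasDerivAt.scomp t hmul
  have hsteep : ∀ t ∈ Set.Ico (0 : ℝ) 1, ‖f (t * z)‖ = t * B → ‖z • deriv f (t * z)‖ < B := by
    intro t ht heq
    have hL := hf' _ (hray t (Set.Ico_subset_Icc_self ht))
      (heq.le.trans (mul_le_of_le_one_left hB ht.2.le))
    calc ‖z • deriv f (t * z)‖ = ‖deriv f (t * z)‖ * ‖z‖ := by rw [norm_smul, mul_comm]
      _ ≤ L * r := mul_le_mul hL hz (norm_nonneg z) ((norm_nonneg _).trans hL)
      _ < B := hLr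
  simpa using image_norm_le_of_norm_deriv_right_lt_deriv_boundary
    (fun t ht ↦ (hderiv t ht).continuousAt.continuousWithinAt)
    (fun t ht ↦ (hderiv t (Set.Ico_subset_Icc_self ht)).hasDerivWithinAt)
    (by simp [h0]) (fun t ↦ hasDerivAt_mul_const B) hsteep (Set.right_mem_Icc.2 zero_le_one)

lemma norm_sub_taylor_le_of_norm_le_sphere [CompleteSpace E] {f : ℂ → E} {c z : ℂ} {B R : ℝ}
    (hR : 0 < R) (hf : DiffContOnCl ℂ f (ball c R)) (hB : ∀ w ∈ sphere c R, ‖f w‖ ≤ B)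
    (hz : ‖z - c‖ ≤ R / 2) (n : ℕ) :
    ‖f z - ∑ k ∈ Finset.range n, (k ! : ℂ)⁻¹ • (z - c) ^ k • iteratedDeriv k f c‖ ≤
      2 * B * (‖z - c‖ / R) ^ n := by
  set q := ‖z - c‖ / R
  have hq0 : 0 ≤ q := by positivity
  have hq : q ≤ 1 / 2 := by rw [div_le_iff₀ hR]; linarith
  have hB0 : 0 ≤ B := by
    obtain ⟨w, hw⟩ := NormedSpace.sphere_nonempty (x := c).2 hR.le
    exact (norm_nonneg _).trans (hB w hw)
  have hz' : z ∈ ball c R := by rw [mem_ball, dist_eq_norm]; linarith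
  have hterm : ∀ k, ‖(k ! : ℂ)⁻¹ • (z - c) ^ k • iteratedDeriv k f c‖ ≤ B * q ^ k := fun k ↦ by
    have hcauchy := norm_iteratedDeriv_le_of_forall_mem_sphere_norm_le k hR hf hB
    rw [norm_smul, norm_smul, norm_inv, Complex.norm_natCast, norm_pow]
    calc (k ! : ℝ)⁻¹ * (‖z - c‖ ^ k * ‖iteratedDeriv k f c‖)
        ≤ (k ! : ℝ)⁻¹ * (‖z - c‖ ^ k * (k ! * B / R ^ k)) := by gcongr
      _ = B * q ^ k := by rw [div_pow]; field_simp
  have htail := (hasSum_nat_add_iff' n).2 (hasSum_taylorSeries_on_ball hf.differentiableOn hz')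
  have hgeom : HasSum (fun k ↦ B * q ^ (k + n)) (B * q ^ n * (1 - q)⁻¹) := by
    simpa only [pow_add, mul_comm, mul_left_comm, mul_assoc] using
      (hasSum_geometric_of_lt_one hq0 (by linarith)).mul_left (B * q ^ n)
  refine (htail.norm_le_of_bounded hgeom fun k ↦ hterm (k + n)).trans ?_
  have hinv : (1 - q)⁻¹ ≤ 2 := inv_le_of_inv_le₀ two_pos (by linarith)
  calc B * q ^ n * (1 - q)⁻¹ ≤ B * q ^ n * 2 := by gcongr
    _ = 2 * B * q ^ n := by ring

lemma iteratedDeriv_comp_ofReal {f : ℂ → ℂ} (hf : ∀ x : ℝ, AnalyticAt ℂ f x) (n : ℕ) :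
    iteratedDeriv n (fun x : ℝ ↦ f x) = fun x : ℝ ↦ iteratedDeriv n f x := by
  induction n with
  | zero => simp only [iteratedDeriv_zero]
  | succ n ih =>
    ext x
    simp only [iteratedDeriv_succ, ih]
    have hn : AnalyticAt ℂ (iteratedDeriv n f) x := by
      simpa only [iteratedDeriv_eq_iterate] using (hf x).iterated_deriv n
    exact hn.differentiableAt.hasDerivAt.comp_ofReal.deriv

lemma norm_exp_le_one_of_re_nonpos {z : ℂ} (hz : z.re ≤ 0) : ‖Complex.exp z‖ ≤ 1 := by
  rwa [Complex.norm_exp, Real.exp_le_one_iff]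

lemma norm_exp_sub_exp_le_of_re_nonpos {z w : ℂ} (hz : z.re ≤ 0) (hw : w.re ≤ 0) :
    ‖Complex.exp z - Complex.exp w‖ ≤ ‖z - w‖ := by
  simpa only [one_mul] using
    Convex.norm_image_sub_le_of_norm_hasDerivWithin_le (C := 1)
      (fun u _ ↦ (Complex.hasDerivAt_exp u).hasDerivWithinAt)
      (fun u hu ↦ norm_exp_le_one_of_re_nonpos hu)
      (convex_halfSpace_re_le 0) hw hz

lemma norm_exp_sub_exp_le_mul_abs_pow {f g : ℝ → ℂ} {M r : ℝ} {n : ℕ} (hr : 0 < r)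
    (hf : ∀ x, (f x).re ≤ 0) (hg : ∀ x, (g x).re ≤ 0)
    (hfg : ∀ x, |x| ≤ r → ‖f x - g x‖ ≤ M * |x| ^ n) (x : ℝ) :
    ‖Complex.exp (f x) - Complex.exp (g x)‖ ≤ max M (2 / r ^ n) * |x| ^ n := by
  rcases le_total |x| r with hx | hx
  · calc ‖Complex.exp (f x) - Complex.exp (g x)‖ ≤ ‖f x - g x‖ :=
          norm_exp_sub_exp_le_of_re_nonpos (hf x) (hg x)
      _ ≤ M * |x| ^ n := hfg x hx
      _ ≤ max M (2 / r ^ n) * |x| ^ n := by gcongr; exact le_max_left _ _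
  · calc ‖Complex.exp (f x) - Complex.exp (g x)‖
        ≤ ‖Complex.exp (f x)‖ + ‖Complex.exp (g x)‖ := norm_sub_le _ _
      _ ≤ 1 + 1 := add_le_add (norm_exp_le_one_of_re_nonpos (hf x))
          (norm_exp_le_one_of_re_nonpos (hg x))
      _ = 2 / r ^ n * r ^ n := by field_simp; norm_num
      _ ≤ max M (2 / r ^ n) * |x| ^ n := by gcongr; exact le_max_right _ _

end ComplexAnalysis

section Gaussian

lemma abs_pow_mul_exp_neg_mul_sq_le {a : ℝ} (ha : 0 < a) (n : ℕ) (u : ℝ) :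
    |u| ^ n * Real.exp (-a * u ^ 2) ≤ √(n ! / a ^ n) * Real.exp (-(a / 2) * u ^ 2) := by
  have hpow : |u| ^ n ≤ √(n ! / a ^ n) * Real.exp (a / 2 * u ^ 2) := by
    refine le_of_sq_le_sq ?_ (by positivity)
    have hexp := Real.pow_div_factorial_le_exp (x := a * u ^ 2) (by positivity) n
    calc (|u| ^ n) ^ 2 = n ! / a ^ n * ((a * u ^ 2) ^ n / n !) := by
          rw [← pow_mul, mul_comm n, pow_mul, sq_abs, mul_pow]; field_simp
      _ ≤ n ! / a ^ n * Real.exp (a * u ^ 2) := by gcongr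
      _ = (√(n ! / a ^ n) * Real.exp (a / 2 * u ^ 2)) ^ 2 := by
          rw [mul_pow, Real.sq_sqrt (by positivity), ← Real.exp_nat_mul]
          push_cast
          ring_nf
  calc |u| ^ n * Real.exp (-a * u ^ 2)
      ≤ √(n ! / a ^ n) * Real.exp (a / 2 * u ^ 2) * Real.exp (-a * u ^ 2) := by gcongr
    _ = √(n ! / a ^ n) * Real.exp (-(a / 2) * u ^ 2) := by
        rw [mul_assoc, ← Real.exp_add]; ring_nf

lemma abs_pow_add_abs_pow_le (x y : ℝ) (n : ℕ) :
    |x| ^ n + |y| ^ n ≤ 2 ^ (n + 1) * (|x - y| ^ n + |y| ^ n) := by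
  have htri : |x| ≤ |x - y| + |y| := by simpa using abs_add_le (x - y) y
  have hx : |x| ^ n ≤ 2 ^ n * (|x - y| ^ n + |y| ^ n) :=
    calc |x| ^ n ≤ (|x - y| + |y|) ^ n := by gcongr
      _ ≤ 2 ^ (n - 1) * (|x - y| ^ n + |y| ^ n) := add_pow_le (abs_nonneg _) (abs_nonneg _) n
      _ ≤ 2 ^ n * (|x - y| ^ n + |y| ^ n) := by gcongr <;> simp
  have hy : |y| ^ n ≤ 2 ^ n * (|x - y| ^ n + |y| ^ n) :=
    (le_add_of_nonneg_left (by positivity)).trans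
      (le_mul_of_one_le_left (by positivity) (one_le_pow₀ one_le_two))
  rw [pow_succ]
  linarith

variable {α κ : ℝ}

lemma exp_mul_exp_le_of_two_mul_le (hα : 0 ≤ α) (hακ : 2 * α ≤ κ) (x y : ℝ) :
    Real.exp (-(κ / 2) * (x - y) ^ 2) * Real.exp (-(α / 2) * y ^ 2) ≤
      Real.exp (-(α / 4) * x ^ 2) * Real.exp (-(κ / 4) * (x - y) ^ 2) := by
  rw [← Real.exp_add, ← Real.exp_add, Real.exp_le_exp]
  -- `x² ≤ 2 (x - y)² + 2 y²`, with `x - 2 y` the difference of the two summands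
  nlinarith [mul_nonneg hα (sq_nonneg (x - 2 * y)),
    mul_nonneg (sub_nonneg.2 hακ) (sq_nonneg (x - y))]

lemma abs_pow_add_abs_pow_mul_exp_mul_exp_le (hα : 0 < α) (hακ : 2 * α ≤ κ) (n : ℕ) (x y : ℝ) :
    (|x| ^ n + |y| ^ n) * (Real.exp (-κ * (x - y) ^ 2) * Real.exp (-α * y ^ 2)) ≤
      2 ^ (n + 2) * √(n ! / α ^ n) *
        (Real.exp (-(α / 4) * x ^ 2) * Real.exp (-(κ / 4) * (x - y) ^ 2)) := by
  have hκ : α ≤ κ := by linarith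
  set S := √(n ! / α ^ n)
  set K := Real.exp (-κ * (x - y) ^ 2)
  set A := Real.exp (-α * y ^ 2)
  set K' := Real.exp (-(κ / 2) * (x - y) ^ 2)
  set A' := Real.exp (-(α / 2) * y ^ 2)
  have hKK' : K ≤ K' := Real.exp_le_exp.2 (by nlinarith [sq_nonneg (x - y)])
  have hAA' : A ≤ A' := Real.exp_le_exp.2 (by nlinarith [sq_nonneg y])
  have hK : |x - y| ^ n * K ≤ S * K' :=
    calc |x - y| ^ n * K ≤ √(n ! / κ ^ n) * K' :=
          abs_pow_mul_exp_neg_mul_sq_le (hα.trans_le hκ) n (x - y)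
      _ ≤ S * K' := by unfold S; gcongr
  have hA : |y| ^ n * A ≤ S * A' := abs_pow_mul_exp_neg_mul_sq_le hα n y
  calc (|x| ^ n + |y| ^ n) * (K * A)
      ≤ 2 ^ (n + 1) * (|x - y| ^ n + |y| ^ n) * (K * A) := by
        gcongr; exact abs_pow_add_abs_pow_le x y n
    _ = 2 ^ (n + 1) * ((|x - y| ^ n * K) * A + K * (|y| ^ n * A)) := by ring
    _ ≤ 2 ^ (n + 1) * ((S * K') * A' + K' * (S * A')) := by gcongr
    _ = 2 ^ (n + 2) * S * (K' * A') := by ring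
    _ ≤ 2 ^ (n + 2) * S *
        (Real.exp (-(α / 4) * x ^ 2) * Real.exp (-(κ / 4) * (x - y) ^ 2)) := by
        exact mul_le_mul_of_nonneg_left (exp_mul_exp_le_of_two_mul_le hα.le hακ x y) (by positivity)

lemma integral_exp_neg_mul_sub_sq (a x : ℝ) :
    ∫ y : ℝ, Real.exp (-a * (x - y) ^ 2) = √(π / a) := by
  rw [← integral_gaussian a]
  exact integral_sub_left_eq_self (fun u : ℝ ↦ Real.exp (-a * u ^ 2)) volume x

lemma norm_Lp_two_le_of_ae_norm_le_exp {E : Type*} [NormedAddCommGroup E]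
    {f : Lp E 2 (volume : Measure ℝ)} {B b : ℝ} (hb : 0 < b) (hB : 0 ≤ B)
    (hf : ∀ᵐ x : ℝ, ‖f x‖ ≤ B * Real.exp (-b * x ^ 2)) :
    ‖f‖ ≤ B * √√(π / (2 * b)) := by
  set h : ℝ → ℝ := fun x ↦ B * Real.exp (-b * x ^ 2)
  have hsq : (fun x ↦ h x ^ 2) = fun x ↦ B ^ 2 * Real.exp (-(2 * b) * x ^ 2) := by
    ext x
    rw [mul_pow, ← Real.exp_nat_mul]
    push_cast
    ring_nf
  have hmem : MemLp h 2 := by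
    rw [memLp_two_iff_integrable_sq (by fun_prop), hsq]
    exact (integrable_exp_neg_mul_sq (by positivity)).const_mul _
  have hle : ‖f‖ ≤ ‖hmem.toLp h‖ := Lp.norm_le_norm_of_ae_le <| by
    filter_upwards [hf, hmem.coeFn_toLp] with x hx hhx
    rw [hhx]
    exact hx.trans (Real.le_norm_self _)
  refine hle.trans_eq ?_
  rw [Lp.norm_toLp, hmem.eLpNorm_eq_integral_rpow_norm two_ne_zero ENNReal.ofNat_ne_top,
    ENNReal.toReal_ofReal (by positivity)]
  simp only [ENNReal.toReal_ofNat, Real.rpow_ofNat, Real.norm_eq_abs, sq_abs]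
  rw [hsq, integral_const_mul, integral_gaussian, ← one_div, ← Real.sqrt_eq_rpow,
    Real.sqrt_mul (sq_nonneg B), Real.sqrt_sq hB]

end Gaussian

section GaussianState

variable {α κ : ℝ}

lemma continuous_gaussF (α : ℝ) : Continuous (gaussF α) := by
  unfold gaussF
  fun_prop

lemma norm_gaussF (hα : 0 ≤ α) (x : ℝ) :
    ‖gaussF α x‖ = (2 * α / π) ^ (1 / 4 : ℝ) * Real.exp (-α * x ^ 2) := by
  have hre : (-(α : ℂ) * (x : ℂ) ^ 2).re = -α * x ^ 2 := by norm_cast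
  rw [gaussF, norm_mul, norm_real, Real.norm_of_nonneg (by positivity), Complex.norm_exp, hre]

lemma integrable_gaussF (hα : 0 < α) : Integrable (gaussF α) :=
  ((integrable_exp_neg_mul_sq hα).const_mul _).mono' (continuous_gaussF α).aestronglyMeasurable
    (.of_forall fun x ↦ (norm_gaussF hα.le x).le)

lemma norm_integral_mul_gaussF_le (hα : 0 < α) (hακ : 2 * α ≤ κ) {M : ℝ} (hM : 0 ≤ M) {n : ℕ}
    {k : ℝ → ℂ} {x : ℝ}
    (hk : ∀ y, ‖k y‖ ≤ M * (|x| ^ n + |y| ^ n) * Real.exp (-κ * (x - y) ^ 2)) :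
    ‖∫ y, k y * gaussF α y‖ ≤
      M * (2 * α / π) ^ (1 / 4 : ℝ) * (2 ^ (n + 2) * √(n ! / α ^ n)) * √(π / (κ / 4)) *
        Real.exp (-(α / 4) * x ^ 2) := by
  set N := (2 * α / π) ^ (1 / 4 : ℝ)
  set D := 2 ^ (n + 2) * √(n ! / α ^ n)
  set G := Real.exp (-(α / 4) * x ^ 2)
  have : 0 ≤ N := by positivity
  have hint : Integrable fun y ↦ M * N * D * G * Real.exp (-(κ / 4) * (x - y) ^ 2) :=
    ((integrable_exp_neg_mul_sq (by linarith : 0 < κ / 4)).comp_sub_left x).const_mul _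
  have hbound : ∀ y, ‖k y * gaussF α y‖ ≤
      M * N * D * G * Real.exp (-(κ / 4) * (x - y) ^ 2) := fun y ↦ by
    rw [norm_mul, norm_gaussF hα.le]
    calc ‖k y‖ * (N * Real.exp (-α * y ^ 2))
        ≤ M * (|x| ^ n + |y| ^ n) * Real.exp (-κ * (x - y) ^ 2) *
            (N * Real.exp (-α * y ^ 2)) := by gcongr; exact hk y
      _ = M * N * ((|x| ^ n + |y| ^ n) *
            (Real.exp (-κ * (x - y) ^ 2) * Real.exp (-α * y ^ 2))) := by ring
      _ ≤ M * N * (D * (G * Real.exp (-(κ / 4) * (x - y) ^ 2))) :=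
          mul_le_mul_of_nonneg_left
            (abs_pow_add_abs_pow_mul_exp_mul_exp_le hα hακ n x y) (by positivity)
      _ = M * N * D * G * Real.exp (-(κ / 4) * (x - y) ^ 2) := by ring
  refine (norm_integral_le_of_norm_le hint (.of_forall hbound)).trans_eq ?_
  rw [integral_const_mul, integral_exp_neg_mul_sub_sq]
  ring

lemma gaussF_normalization_mul_sqrt_sqrt (hα : 0 < α) :
    (2 * α / π) ^ (1 / 4 : ℝ) * √√(π / (2 * (α / 4))) = √2 := by
  have hroot : (2 * α / π) ^ (1 / 4 : ℝ) = √√(2 * α / π) := by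
    rw [Real.sqrt_eq_rpow, Real.sqrt_eq_rpow, ← Real.rpow_mul (by positivity)]
    norm_num
  rw [hroot, ← Real.sqrt_mul (by positivity), ← Real.sqrt_mul (by positivity)]
  congr 1
  rw [Real.sqrt_eq_iff_mul_self_eq (by positivity) zero_le_two]
  field_simp
  norm_num

end GaussianState

section IntegralOperators

variable {α κ M : ℝ} {n : ℕ}

lemma IsKerOp.sub_apply_ae_eq {k₁ k₂ : ℝ → ℝ → ℂ} {T₁ T₂ : Hsp →L[ℂ] Hsp} (h₁ : IsKerOp k₁ T₁)
    (h₂ : IsKerOp k₂ T₂) {g : Hsp} {u : ℝ → ℂ} (hg : g =ᵐ[volume] u)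
    (hint₁ : ∀ x, Integrable fun y ↦ k₁ x y * u y) (hint₂ : ∀ x, Integrable fun y ↦ k₂ x y * u y) :
    ∀ᵐ x : ℝ, (T₁ g - T₂ g) x = ∫ y, (k₁ x y - k₂ x y) * u y := by
  have hcongr : ∀ (k : ℝ → ℝ → ℂ) (x : ℝ), ∫ y, k x y * g y = ∫ y, k x y * u y := fun k x ↦
    integral_congr_ae (hg.mono fun y hy ↦ congrArg (k x y * ·) hy)
  filter_upwards [Lp.coeFn_sub (T₁ g) (T₂ g), h₁ g, h₂ g] with x hsub hx₁ hx₂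
  simp only [hsub, Pi.sub_apply, hx₁, hx₂, hcongr, sub_mul]
  exact (integral_sub (hint₁ x) (hint₂ x)).symm

theorem IsKerOp.norm_sub_apply_gaussF_le {k₁ k₂ : ℝ → ℝ → ℂ} {T₁ T₂ : Hsp →L[ℂ] Hsp}
    (h₁ : IsKerOp k₁ T₁) (h₂ : IsKerOp k₂ T₂) (hα : 0 < α) (hακ : 2 * α ≤ κ) (hM : 0 ≤ M)
    (hint₁ : ∀ x, Integrable fun y ↦ k₁ x y * gaussF α y)
    (hint₂ : ∀ x, Integrable fun y ↦ k₂ x y * gaussF α y)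
    (hk : ∀ x y, ‖k₁ x y - k₂ x y‖ ≤ M * (|x| ^ n + |y| ^ n) * Real.exp (-κ * (x - y) ^ 2))
    {g : Hsp} (hg : g =ᵐ[volume] gaussF α) :
    ‖T₁ g - T₂ g‖ ≤ 2 ^ (n + 2) * M * √(8 * π * n ! / (α ^ n * κ)) := by
  have hpointwise := (h₁.sub_apply_ae_eq h₂ hg hint₁ hint₂).mono fun x hx ↦
    (congrArg norm hx).le.trans (norm_integral_mul_gaussF_le hα hακ hM (hk x))
  refine (norm_Lp_two_le_of_ae_norm_le_exp (by positivity) (by positivity) hpointwise).trans_eq ?_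
  calc M * (2 * α / π) ^ (1 / 4 : ℝ) * (2 ^ (n + 2) * √(n ! / α ^ n)) * √(π / (κ / 4)) *
        √√(π / (2 * (α / 4)))
      = 2 ^ (n + 2) * M * (√(n ! / α ^ n) * √(π / (κ / 4)) *
          ((2 * α / π) ^ (1 / 4 : ℝ) * √√(π / (2 * (α / 4))))) := by ring
    _ = 2 ^ (n + 2) * M * √(8 * π * n ! / (α ^ n * κ)) := by
      rw [gaussF_normalization_mul_sqrt_sqrt hα, ← Real.sqrt_mul (by positivity),
        ← Real.sqrt_mul' _ zero_le_two]
      congr 2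
      have hκ : κ ≠ 0 := by linarith
      field_simp
      norm_num

variable {W : ℝ} {ζ : ℂ} {U V : ℝ → ℂ}

lemma kerK_eq_mul (W : ℝ) (ζ : ℂ) (U : ℝ → ℂ) (x y : ℝ) :
    kerK W ζ U x y = Complex.exp (-(W : ℂ) ^ 2 * ζ ^ 2 * ((x : ℂ) - (y : ℂ)) ^ 2) *
      (Complex.exp (-U x / 2) * Complex.exp (-U y / 2)) := by
  rw [kerK, ← Complex.exp_add, ← Complex.exp_add]
  ring_nf

lemma norm_exp_neg_sq_mul_sub_sq (W : ℝ) (ζ : ℂ) (x y : ℝ) :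
    ‖Complex.exp (-(W : ℂ) ^ 2 * ζ ^ 2 * ((x : ℂ) - (y : ℂ)) ^ 2)‖ =
      Real.exp (-(W ^ 2 * (ζ ^ 2).re) * (x - y) ^ 2) := by
  have hcast : -(W : ℂ) ^ 2 * ζ ^ 2 * ((x : ℂ) - (y : ℂ)) ^ 2 =
      ((-W ^ 2 * (x - y) ^ 2 : ℝ) : ℂ) * ζ ^ 2 := by push_cast; ring
  rw [Complex.norm_exp, hcast, re_ofReal_mul]
  ring_nf

lemma re_neg_div_two_nonpos {z : ℂ} (hz : 0 ≤ z.re) : (-z / 2).re ≤ 0 := by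
  have hre : (-z / 2).re = -z.re / 2 := by simp
  linarith

lemma norm_exp_neg_div_two_le_one {z : ℂ} (hz : 0 ≤ z.re) : ‖Complex.exp (-z / 2)‖ ≤ 1 :=
  norm_exp_le_one_of_re_nonpos (re_neg_div_two_nonpos hz)

lemma integrable_kerK_mul_gaussF (hζ : 0 ≤ (ζ ^ 2).re) (hU : Continuous U)
    (hUre : ∀ x, 0 ≤ (U x).re) (hα : 0 < α) (x : ℝ) :
    Integrable fun y ↦ kerK W ζ U x y * gaussF α y := by
  refine (integrable_gaussF hα).bdd_mul (c := 1) ?_ (.of_forall fun y ↦ ?_)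
  · unfold kerK
    exact Continuous.aestronglyMeasurable (by fun_prop)
  · rw [kerK_eq_mul, norm_mul, norm_mul, norm_exp_neg_sq_mul_sub_sq]
    have hfree : Real.exp (-(W ^ 2 * (ζ ^ 2).re) * (x - y) ^ 2) ≤ 1 :=
      Real.exp_le_one_iff.2 (mul_nonpos_of_nonpos_of_nonneg
        (neg_nonpos.2 (mul_nonneg (sq_nonneg W) hζ)) (sq_nonneg _))
    exact mul_le_one₀ hfree (by positivity) (mul_le_one₀ (norm_exp_neg_div_two_le_one (hUre x))
      (norm_nonneg _) (norm_exp_neg_div_two_le_one (hUre y)))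

lemma norm_kerK_sub_kerK_le (hU : ∀ x, 0 ≤ (U x).re) (hV : ∀ x, 0 ≤ (V x).re)
    (hUV : ∀ x, ‖Complex.exp (-U x / 2) - Complex.exp (-V x / 2)‖ ≤ M * |x| ^ n) (x y : ℝ) :
    ‖kerK W ζ U x y - kerK W ζ V x y‖ ≤
      M * (|x| ^ n + |y| ^ n) * Real.exp (-(W ^ 2 * (ζ ^ 2).re) * (x - y) ^ 2) := by
  set e := fun x ↦ Complex.exp (-U x / 2)
  set e' := fun x ↦ Complex.exp (-V x / 2)
  have hprod : ‖e x * e y - e' x * e' y‖ ≤ M * (|x| ^ n + |y| ^ n) :=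
    calc ‖e x * e y - e' x * e' y‖ = ‖(e x - e' x) * e y + e' x * (e y - e' y)‖ := by ring_nf
      _ ≤ ‖e x - e' x‖ * ‖e y‖ + ‖e' x‖ * ‖e y - e' y‖ := by
          simpa only [norm_mul] using norm_add_le ((e x - e' x) * e y) (e' x * (e y - e' y))
      _ ≤ ‖e x - e' x‖ * 1 + 1 * ‖e y - e' y‖ := by
          gcongr
          exacts [norm_exp_neg_div_two_le_one (hU y), norm_exp_neg_div_two_le_one (hV x)]
      _ ≤ M * (|x| ^ n + |y| ^ n) := by linarith [hUV x, hUV y]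
  rw [kerK_eq_mul, kerK_eq_mul, ← mul_sub, norm_mul, norm_exp_neg_sq_mul_sub_sq, mul_comm]
  gcongr

theorem norm_sub_apply_gaussF_le_of_isKerOp_kerK (hU : Continuous U) (hV : Continuous V)
    (hUre : ∀ x, 0 ≤ (U x).re) (hVre : ∀ x, 0 ≤ (V x).re) (hM : 0 ≤ M)
    (hUV : ∀ x, ‖Complex.exp (-U x / 2) - Complex.exp (-V x / 2)‖ ≤ M * |x| ^ n)
    (hα : 0 < α) (hαW : 2 * α ≤ W ^ 2 * (ζ ^ 2).re) {T₁ T₂ : Hsp →L[ℂ] Hsp}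
    (h₁ : IsKerOp (kerK W ζ U) T₁) (h₂ : IsKerOp (kerK W ζ V) T₂)
    {g : Hsp} (hg : g =ᵐ[volume] gaussF α) :
    ‖T₁ g - T₂ g‖ ≤ 2 ^ (n + 2) * M * √(8 * π * n ! / (α ^ n * (W ^ 2 * (ζ ^ 2).re))) := by
  have hζ : 0 ≤ (ζ ^ 2).re := by
    by_contra! hneg
    nlinarith [mul_nonpos_of_nonneg_of_nonpos (sq_nonneg W) hneg.le]
  exact h₁.norm_sub_apply_gaussF_le h₂ hα hαW hM (integrable_kerK_mul_gaussF hζ hU hUre hα)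
    (integrable_kerK_mul_gaussF hζ hV hVre hα) (norm_kerK_sub_kerK_le hUre hVre hUV) hg

lemma norm_muK (W : ℝ) (ζ : ℂ) (U : ℝ → ℂ) :
    ‖muK W ζ U‖ = √(π / ‖(W : ℂ) ^ 2 * ζ ^ 2 + (alph W ζ U : ℂ)‖) := by
  have hhalf : (1 / 2 : ℂ) = ((1 / 2 : ℝ) : ℂ) := by norm_num
  rw [muK, hhalf, norm_cpow_real, norm_div, norm_real, Real.norm_of_nonneg pi_pos.le,
    Real.sqrt_eq_rpow]

lemma one_div_le_norm_muK (hW : 0 < W) (hζ : ‖ζ‖ = 1) (hre : 0 < (ζ ^ 2).re)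
    (hα : 0 ≤ alph W ζ U) (hαW : alph W ζ U ≤ W ^ 2) : 1 / W ≤ ‖muK W ζ U‖ := by
  set D := (W : ℂ) ^ 2 * ζ ^ 2 + (alph W ζ U : ℂ)
  -- `D` must be kept away from `0`, where the quotient `π / ‖D‖` takes the junk value `0`
  have hD : 0 < ‖D‖ := by
    have hDre : D.re = W ^ 2 * (ζ ^ 2).re + alph W ζ U := by
      rw [add_re, ← ofReal_pow, re_ofReal_mul, ofReal_re]
    exact (hDre ▸ by positivity : 0 < D.re).trans_le (re_le_norm D)
  have hDle : ‖D‖ ≤ π * W ^ 2 :=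
    calc ‖D‖ ≤ ‖(W : ℂ) ^ 2 * ζ ^ 2‖ + ‖(alph W ζ U : ℂ)‖ := norm_add_le _ _
      _ = W ^ 2 + alph W ζ U := by
          rw [norm_mul, norm_pow, norm_pow, hζ, norm_real, norm_real, Real.norm_of_nonneg hW.le,
            Real.norm_of_nonneg hα, one_pow, mul_one]
      _ ≤ π * W ^ 2 := by nlinarith [pi_gt_three, sq_nonneg W]
  rw [norm_muK]
  apply Real.le_sqrt_of_sq_le
  rw [div_pow, one_pow, div_le_div_iff₀ (by positivity) hD]
  linarith

end IntegralOperators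

/-- The radius of a disc around `0` on which the analytic extension of a potential satisfying
`UHyp C c γ ζ` is bounded by `1`. -/
noncomputable def taylorRadius (C c : ℝ) : ℝ := min c (1 / (2 * C))

/-- The quadratic Taylor polynomial of the potential `U` at its critical point `0`: the potential
of the harmonic approximation `kerKt`. -/
noncomputable def harmonicPotential (U : ℝ → ℂ) (x : ℝ) : ℂ := deriv (deriv U) 0 / 2 * (x : ℂ) ^ 2

section Potential

variable {C c γ W : ℝ} {ζ : ℂ} {U : ℝ → ℂ}

lemma taylorRadius_pos (hC : 0 < C) (hc : 0 < c) : 0 < taylorRadius C c :=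
  lt_min hc (by positivity)

lemma mul_taylorRadius_lt_one (hC : 0 < C) (c : ℝ) : C * taylorRadius C c < 1 :=
  calc C * taylorRadius C c ≤ C * (1 / (2 * C)) := by gcongr; exact min_le_right _ _
    _ < 1 := by field_simp; norm_num

lemma kerKt_eq_kerK (W : ℝ) (ζ : ℂ) (U : ℝ → ℂ) :
    kerKt W ζ U = kerK W ζ (harmonicPotential U) := by
  ext x y
  unfold kerKt kerK harmonicPotential
  ring_nf

lemma re_harmonicPotential (U : ℝ → ℂ) (x : ℝ) :
    (harmonicPotential U x).re = (deriv (deriv U) 0).re / 2 * x ^ 2 := by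
  have hcast : harmonicPotential U x = ((x ^ 2 / 2 : ℝ) : ℂ) * deriv (deriv U) 0 := by
    rw [harmonicPotential]
    push_cast
    ring
  rw [hcast, re_ofReal_mul]
  ring

lemma continuous_harmonicPotential (U : ℝ → ℂ) : Continuous (harmonicPotential U) := by
  unfold harmonicPotential
  fun_prop

lemma sqrt_one_div_pow_five (hW : 0 < W) : √(1 / W ^ 5) = W ^ (-(3 : ℝ) / 2) * (1 / W) := by
  have hexp : -(3 : ℝ) / 2 + -1 = -((5 : ℕ) : ℝ) * (1 / 2) := by norm_num
  rw [one_div, one_div, ← Real.rpow_neg_one W, ← Real.rpow_add hW, hexp, Real.rpow_mul hW.le,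
    Real.rpow_neg hW.le, Real.rpow_natCast, Real.sqrt_eq_rpow]

namespace UHyp

lemma exists_extension (hU : UHyp C c γ ζ U) (hC : 0 < C) (hc : 0 < c) :
    ∃ F : ℂ → ℂ, (∀ x : ℝ, F x = U x) ∧ (∀ n, iteratedDeriv n F 0 = iteratedDeriv n U 0) ∧
      DiffContOnCl ℂ F (ball 0 (taylorRadius C c)) ∧
      ∀ z ∈ sphere (0 : ℂ) (taylorRadius C c), ‖F z‖ ≤ 1 := by
  obtain ⟨F, hFU, hF, hF'⟩ := hU.hU4
  have hdisc : closedBall 0 (taylorRadius C c) ⊆ {z : ℂ | |z.im| ≤ c} := fun z hz ↦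
    (abs_im_le_norm z).trans ((mem_closedBall_zero_iff.1 hz).trans (min_le_left _ _))
  have hreal : ∀ x : ℝ, AnalyticAt ℂ F x := fun x ↦ hF x (by simpa using hc.le)
  have hF0 : F 0 = 0 := by simpa only [ofReal_zero, hU.hU1zero] using hFU 0
  refine ⟨F, hFU, fun n ↦ ?_, hF.differentiableOn.diffContOnCl_ball hdisc, fun z hz ↦ ?_⟩
  · simpa only [hFU, ofReal_zero] using (congrFun (iteratedDeriv_comp_ofReal hreal n) 0).symm
  · refine norm_le_of_norm_deriv_le_of_norm_le zero_le_one (mul_taylorRadius_lt_one hC c) hF0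
      (fun w hw ↦ (hF w (hdisc (mem_closedBall_zero_iff.2 hw))).differentiableAt)
      (fun w hw hFw ↦ ?_) (mem_sphere_zero_iff_norm.1 hz).le
    have hmax : max 1 (F w).re = 1 := max_eq_left ((re_le_norm _).trans hFw)
    simpa only [hmax, Real.one_rpow, mul_one] using hF' w (hdisc (mem_closedBall_zero_iff.2 hw))

lemma norm_sub_taylor_le (hU : UHyp C c γ ζ U) (hC : 0 < C) (hc : 0 < c) {x : ℝ}
    (hx : |x| ≤ taylorRadius C c / 2) (n : ℕ) :
    ‖U x - ∑ k ∈ Finset.range n, (k ! : ℂ)⁻¹ • (x : ℂ) ^ k • iteratedDeriv k U 0‖ ≤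
      2 * (|x| / taylorRadius C c) ^ n := by
  obtain ⟨F, hFU, hderiv, hF, hF1⟩ := hU.exists_extension hC hc
  have hx' : ‖(x : ℂ) - 0‖ ≤ taylorRadius C c / 2 := by simpa using hx
  simpa only [hFU, hderiv, sub_zero, norm_real, Real.norm_eq_abs, mul_one] using
    norm_sub_taylor_le_of_norm_le_sphere (taylorRadius_pos hC hc) hF hF1 hx' n

lemma norm_iteratedDeriv_le (hU : UHyp C c γ ζ U) (hC : 0 < C) (hc : 0 < c) (n : ℕ) :
    ‖iteratedDeriv n U 0‖ ≤ n ! / taylorRadius C c ^ n := by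
  obtain ⟨F, -, hderiv, hF, hF1⟩ := hU.exists_extension hC hc
  simpa only [hderiv, mul_one] using
    norm_iteratedDeriv_le_of_forall_mem_sphere_norm_le n (taylorRadius_pos hC hc) hF hF1

lemma norm_deriv_deriv_le (hU : UHyp C c γ ζ U) (hC : 0 < C) (hc : 0 < c) :
    ‖deriv (deriv U) 0‖ ≤ 2 / taylorRadius C c ^ 2 := by
  simpa only [iteratedDeriv_succ, iteratedDeriv_zero, Nat.factorial_two, Nat.cast_ofNat] using
    hU.norm_iteratedDeriv_le hC hc 2

lemma norm_sub_harmonicPotential_le (hU : UHyp C c γ ζ U) (hC : 0 < C) (hc : 0 < c) {x : ℝ}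
    (hx : |x| ≤ taylorRadius C c / 2) :
    ‖U x - harmonicPotential U x‖ ≤ 2 / taylorRadius C c ^ 3 * |x| ^ 3 := by
  have htaylor := hU.norm_sub_taylor_le hC hc hx 3
  simp only [Finset.sum_range_succ, Finset.sum_range_zero, iteratedDeriv_succ, iteratedDeriv_zero,
    hU.hU1zero, hU.hU1deriv, zero_add, smul_eq_mul] at htaylor
  convert htaylor using 1
  · rw [harmonicPotential]
    norm_num [Nat.factorial]
    ring_nf
  · ring

lemma re_nonneg (hU : UHyp C c γ ζ U) (hC : 0 < C) (x : ℝ) : 0 ≤ (U x).re :=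
  (by positivity : 0 ≤ 1 / C * min 1 (x ^ 2)).trans (hU.hU3 x)

lemma two_div_le_re_deriv_deriv (hU : UHyp C c γ ζ U) (hC : 0 < C) (hc : 0 < c) :
    2 / C ≤ (deriv (deriv U) 0).re := by
  set p := deriv (deriv U) 0
  set M := 2 / taylorRadius C c ^ 3
  have hnear : ∀ᶠ x in 𝓝[>] (0 : ℝ), 1 / C ≤ p.re / 2 + M * x := by
    filter_upwards [Ioo_mem_nhdsGT (lt_min (half_pos (taylorRadius_pos hC hc)) one_pos)]
      with x ⟨hx0, hx⟩
    have hxR : |x| ≤ taylorRadius C c / 2 := by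
      rw [abs_of_pos hx0]
      exact (hx.trans_le (min_le_left _ _)).le
    have hx1 : x ^ 2 ≤ 1 := pow_le_one₀ hx0.le (hx.trans_le (min_le_right _ _)).le
    have htaylor := (re_le_norm _).trans (hU.norm_sub_harmonicPotential_le hC hc hxR)
    have hlower := hU.hU3 x
    rw [sub_re, re_harmonicPotential, abs_of_pos hx0] at htaylor
    rw [min_eq_right hx1] at hlower
    refine le_of_mul_le_mul_right ?_ (pow_pos hx0 2)
    linarith
  have hlim : Tendsto (fun x ↦ p.re / 2 + M * x) (𝓝[>] 0) (𝓝 (p.re / 2)) := by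
    have hcont : Continuous fun x ↦ p.re / 2 + M * x := by fun_prop
    simpa using (hcont.tendsto 0).mono_left nhdsWithin_le_nhds
  have := ge_of_tendsto hlim hnear
  rw [← mul_one_div]
  linarith

lemma re_harmonicPotential_nonneg (hU : UHyp C c γ ζ U) (hC : 0 < C) (hc : 0 < c) (x : ℝ) :
    0 ≤ (harmonicPotential U x).re := by
  have hpos : 0 ≤ (deriv (deriv U) 0).re :=
    (by positivity : 0 ≤ 2 / C).trans (hU.two_div_le_re_deriv_deriv hC hc)
  rw [re_harmonicPotential]
  positivity

lemma re_deriv_deriv_eq (hU : UHyp C c γ ζ U) :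
    (deriv (deriv U) 0).re = (ζ ^ 2).re * (ζ ^ 2 * deriv (deriv U) 0).re := by
  have hunit : conj (ζ ^ 2) * ζ ^ 2 = 1 := by
    rw [conj_mul', norm_pow, hU.hζ, one_pow, ofReal_one, one_pow]
  calc (deriv (deriv U) 0).re = (conj (ζ ^ 2) * (ζ ^ 2 * deriv (deriv U) 0)).re := by
        rw [← mul_assoc, hunit, one_mul]
    _ = (ζ ^ 2).re * (ζ ^ 2 * deriv (deriv U) 0).re := by
        rw [mul_re, hU.hU2im, mul_zero, sub_zero, conj_re]

lemma re_sq_mul_deriv_deriv_le (hU : UHyp C c γ ζ U) (hC : 0 < C) (hc : 0 < c) :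
    (ζ ^ 2 * deriv (deriv U) 0).re ≤ 2 / taylorRadius C c ^ 2 := by
  have hle := re_le_norm (ζ ^ 2 * deriv (deriv U) 0)
  rw [norm_mul, norm_pow, hU.hζ, one_pow, one_mul] at hle
  exact hle.trans (hU.norm_deriv_deriv_le hC hc)

lemma re_sq_le_one (hU : UHyp C c γ ζ U) : (ζ ^ 2).re ≤ 1 :=
  (re_le_norm (ζ ^ 2)).trans_eq (by rw [norm_pow, hU.hζ, one_pow])

lemma two_div_le_re_sq_mul_deriv_deriv (hU : UHyp C c γ ζ U) (hC : 0 < C) (hc : 0 < c) :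
    2 / C ≤ (ζ ^ 2 * deriv (deriv U) 0).re :=
  calc 2 / C ≤ (ζ ^ 2).re * (ζ ^ 2 * deriv (deriv U) 0).re :=
        hU.re_deriv_deriv_eq ▸ hU.two_div_le_re_deriv_deriv hC hc
    _ ≤ (ζ ^ 2 * deriv (deriv U) 0).re := mul_le_of_le_one_left hU.hU2pos.le hU.re_sq_le_one

lemma taylorRadius_sq_div_le_re_sq (hU : UHyp C c γ ζ U) (hC : 0 < C) (hc : 0 < c) :
    taylorRadius C c ^ 2 / C ≤ (ζ ^ 2).re := by
  have hR := taylorRadius_pos hC hc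
  have hprod :=
    calc 2 / C ≤ (ζ ^ 2).re * (ζ ^ 2 * deriv (deriv U) 0).re :=
          hU.re_deriv_deriv_eq ▸ hU.two_div_le_re_deriv_deriv hC hc
      _ ≤ (ζ ^ 2).re * (2 / taylorRadius C c ^ 2) :=
          mul_le_mul_of_nonneg_left (hU.re_sq_mul_deriv_deriv_le hC hc) hU.hζre.le
  calc taylorRadius C c ^ 2 / C = 2 / C * (taylorRadius C c ^ 2 / 2) := by ring
    _ ≤ (ζ ^ 2).re * (2 / taylorRadius C c ^ 2) * (taylorRadius C c ^ 2 / 2) := by gcongr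
    _ = (ζ ^ 2).re := by field_simp

lemma norm_exp_sub_exp_harmonicPotential_le (hU : UHyp C c γ ζ U) (hC : 0 < C) (hc : 0 < c)
    (x : ℝ) :
    ‖Complex.exp (-U x / 2) - Complex.exp (-harmonicPotential U x / 2)‖ ≤
      16 / taylorRadius C c ^ 3 * |x| ^ 3 := by
  have hR := taylorRadius_pos hC hc
  have hnear : ∀ x, |x| ≤ taylorRadius C c / 2 →
      ‖-U x / 2 - -harmonicPotential U x / 2‖ ≤ 1 / taylorRadius C c ^ 3 * |x| ^ 3 := fun x hx ↦
    calc ‖-U x / 2 - -harmonicPotential U x / 2‖ = ‖U x - harmonicPotential U x‖ / 2 := by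
          rw [← sub_div, norm_div, Complex.norm_ofNat, neg_sub_neg, norm_sub_rev]
      _ ≤ 2 / taylorRadius C c ^ 3 * |x| ^ 3 / 2 := by
          gcongr; exact hU.norm_sub_harmonicPotential_le hC hc hx
      _ = 1 / taylorRadius C c ^ 3 * |x| ^ 3 := by ring
  have hmax : max (1 / taylorRadius C c ^ 3) (2 / (taylorRadius C c / 2) ^ 3) =
      16 / taylorRadius C c ^ 3 := by
    have hfar : 2 / (taylorRadius C c / 2) ^ 3 = 16 / taylorRadius C c ^ 3 := by
      field_simp
      norm_num
    rw [hfar]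
    exact max_eq_right (by gcongr; norm_num)
  simpa only [hmax] using norm_exp_sub_exp_le_mul_abs_pow (half_pos hR)
    (fun x ↦ re_neg_div_two_nonpos (hU.re_nonneg hC x))
    (fun x ↦ re_neg_div_two_nonpos (hU.re_harmonicPotential_nonneg hC hc x)) hnear x

lemma alph_pos (hU : UHyp C c γ ζ U) (hW : 0 < W) : 0 < alph W ζ U :=
  mul_pos hW (Real.sqrt_pos.2 (half_pos hU.hU2pos))

lemma mul_sqrt_one_div_le_alph (hU : UHyp C c γ ζ U) (hC : 0 < C) (hc : 0 < c) (hW : 0 ≤ W) :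
    W * √(1 / C) ≤ alph W ζ U := by
  have hhalf : 1 / C ≤ (ζ ^ 2 * deriv (deriv U) 0).re / 2 := by
    linarith [hU.two_div_le_re_sq_mul_deriv_deriv hC hc, mul_one_div 2 C]
  exact mul_le_mul_of_nonneg_left (Real.sqrt_le_sqrt hhalf) hW

lemma alph_le_div_taylorRadius (hU : UHyp C c γ ζ U) (hC : 0 < C) (hc : 0 < c) (hW : 0 ≤ W) :
    alph W ζ U ≤ W / taylorRadius C c := by
  have hR := taylorRadius_pos hC hc
  have hhalf : (ζ ^ 2 * deriv (deriv U) 0).re / 2 ≤ (taylorRadius C c)⁻¹ ^ 2 := by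
    rw [inv_pow]
    linarith [hU.re_sq_mul_deriv_deriv_le hC hc, div_eq_mul_inv 2 (taylorRadius C c ^ 2)]
  rw [div_eq_mul_inv]
  exact mul_le_mul_of_nonneg_left ((Real.sqrt_le_left (by positivity)).2 hhalf) hW

lemma two_mul_alph_le (hU : UHyp C c γ ζ U) (hC : 0 < C) (hc : 0 < c)
    (hW : 2 * C / taylorRadius C c ^ 3 ≤ W) : 2 * alph W ζ U ≤ W ^ 2 * (ζ ^ 2).re := by
  have hR := taylorRadius_pos hC hc
  have hW0 : 0 < W := (by positivity : 0 < 2 * C / taylorRadius C c ^ 3).trans_le hW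
  calc 2 * alph W ζ U ≤ 2 * (W / taylorRadius C c) := by
        gcongr; exact hU.alph_le_div_taylorRadius hC hc hW0.le
    _ = W * (2 * C / taylorRadius C c ^ 3) * (taylorRadius C c ^ 2 / C) := by field_simp
    _ ≤ W * W * (ζ ^ 2).re := by gcongr; exact hU.taylorRadius_sq_div_le_re_sq hC hc
    _ = W ^ 2 * (ζ ^ 2).re := by ring

theorem norm_sub_apply_gaussF_le (hU : UHyp C c γ ζ U) (hC : 0 < C) (hc : 0 < c)
    (hα : 0 < alph W ζ U) (hαW : 2 * alph W ζ U ≤ W ^ 2 * (ζ ^ 2).re) {K Kt : Hsp →L[ℂ] Hsp}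
    (hK : IsKerOp (kerK W ζ U) K) (hKt : IsKerOp (kerKt W ζ U) Kt)
    {g : Hsp} (hg : g =ᵐ[volume] gaussF (alph W ζ U)) :
    ‖K g - Kt g‖ ≤ 2 ^ 5 * (16 / taylorRadius C c ^ 3) *
      √(8 * π * 3 ! / (alph W ζ U ^ 3 * (W ^ 2 * (ζ ^ 2).re))) := by
  have hR := taylorRadius_pos hC hc
  rw [kerKt_eq_kerK] at hKt
  exact norm_sub_apply_gaussF_le_of_isKerOp_kerK hU.hU1smooth.continuous
    (continuous_harmonicPotential U) (hU.re_nonneg hC) (hU.re_harmonicPotential_nonneg hC hc)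
    (by positivity) (hU.norm_exp_sub_exp_harmonicPotential_le hC hc) hα hαW hK hKt hg

lemma sqrt_div_le (hU : UHyp C c γ ζ U) (hC : 0 < C) (hc : 0 < c) (hW : 0 < W) {a : ℝ}
    (ha : 0 ≤ a) :
    √(a / (alph W ζ U ^ 3 * (W ^ 2 * (ζ ^ 2).re))) ≤
      √(a / (√(1 / C) ^ 3 * (taylorRadius C c ^ 2 / C))) * W ^ (-(3 : ℝ) / 2) * (1 / W) := by
  have hR := taylorRadius_pos hC hc
  have hαW := hU.mul_sqrt_one_div_le_alph hC hc hW.le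
  have hα := hU.alph_pos hW
  have hζ := hU.taylorRadius_sq_div_le_re_sq hC hc
  calc √(a / (alph W ζ U ^ 3 * (W ^ 2 * (ζ ^ 2).re)))
      ≤ √(a / ((W * √(1 / C)) ^ 3 * (W ^ 2 * (taylorRadius C c ^ 2 / C)))) := by gcongr
    _ = √(a / (√(1 / C) ^ 3 * (taylorRadius C c ^ 2 / C)) * (1 / W ^ 5)) := by
        congr 1
        field_simp
    _ = √(a / (√(1 / C) ^ 3 * (taylorRadius C c ^ 2 / C))) * W ^ (-(3 : ℝ) / 2) * (1 / W) := by
        rw [Real.sqrt_mul (by positivity), sqrt_one_div_pow_five hW, mul_assoc]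

end UHyp

end Potential

theorem stmt_13_general :
    ∀ (C c : ℝ), 0 < C → 0 < c →
    ∃ C' : ℝ, 0 < C' ∧ ∃ W₀ : ℝ, 0 < W₀ ∧
    ∀ (γ W : ℝ) (ζ : ℂ) (U : ℝ → ℂ), W₀ ≤ W → UHyp C c γ ζ U →
    ∀ K : Hsp →L[ℂ] Hsp, IsKerOp (kerK W ζ U) K →
    ∀ Kt : Hsp →L[ℂ] Hsp, IsKerOp (kerKt W ζ U) Kt →
    ∀ g : Hsp, (∀ᵐ x : ℝ, (g : ℝ → ℂ) x = gaussF (alph W ζ U) x) →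
      ‖K g - Kt g‖ ≤ C' * W ^ (-(3 : ℝ) / 2) * ‖muK W ζ U‖ := by
  intro C c hC hc
  have hR := taylorRadius_pos hC hc
  set M := 2 ^ 5 * (16 / taylorRadius C c ^ 3)
  set D := √(8 * π * 3 ! / (√(1 / C) ^ 3 * (taylorRadius C c ^ 2 / C)))
  have : 0 < D := by positivity
  refine ⟨M * D, by positivity, 2 * C / taylorRadius C c ^ 3, by positivity, ?_⟩
  intro γ W ζ U hW hU K hK Kt hKt g hg
  have hW0 : 0 < W := (by positivity : 0 < 2 * C / taylorRadius C c ^ 3).trans_le hW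
  have hα := hU.alph_pos hW0
  have h2α := hU.two_mul_alph_le hC hc hW
  have hαW : alph W ζ U ≤ W ^ 2 := by
    linarith [mul_le_of_le_one_right (sq_nonneg W) hU.re_sq_le_one]
  calc ‖K g - Kt g‖
      ≤ M * √(8 * π * 3 ! / (alph W ζ U ^ 3 * (W ^ 2 * (ζ ^ 2).re))) :=
        hU.norm_sub_apply_gaussF_le hC hc hα h2α hK hKt hg
    _ ≤ M * (D * W ^ (-(3 : ℝ) / 2) * (1 / W)) := by
        gcongr; exact hU.sqrt_div_le hC hc hW0 (by positivity)
    _ ≤ M * (D * W ^ (-(3 : ℝ) / 2) * ‖muK W ζ U‖) := by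
        gcongr; exact one_div_le_norm_muK hW0 hU.hζ hU.hζre hα.le hαW
    _ = M * D * W ^ (-(3 : ℝ) / 2) * ‖muK W ζ U‖ := by ring

/-- `‖(K − K̃)g_α‖ ≤ C'·W^{−3/2+ε}·|μ|`, where `K̃` is the harmonic
approximation of `K`. -/
theorem stmt_13 :
    ∀ (C c γ : ℝ), 1 ≤ C → 0 < c → 1 < γ →
    ∀ ε : ℝ, 0 < ε →
    ∃ C' : ℝ, 0 < C' ∧ ∃ W₀ : ℝ, 0 < W₀ ∧
    ∀ (W : ℝ) (ζ : ℂ) (U : ℝ → ℂ), W₀ ≤ W → UHyp C c γ ζ U →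
    ∀ K : Hsp →L[ℂ] Hsp, IsKerOp (kerK W ζ U) K →
    ∀ Kt : Hsp →L[ℂ] Hsp, IsKerOp (kerKt W ζ U) Kt →
    ∀ g : Hsp, (∀ᵐ x : ℝ, (g : ℝ → ℂ) x = gaussF (alph W ζ U) x) →
      ‖K g - Kt g‖ ≤ C' * W ^ (-(3:ℝ)/2 + ε) * ‖muK W ζ U‖ := by
  intro C c γ hC hc _ ε hε
  obtain ⟨C', hC', W₀, -, h⟩ := stmt_13_general C c (by linarith) hc
  refine ⟨C', hC', max 1 W₀, by positivity, fun W ζ U hW hU K hK Kt hKt g hg ↦ ?_⟩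
  refine (h γ W ζ U ((le_max_right _ _).trans hW) hU K hK Kt hKt g hg).trans ?_
  gcongr
  exacts [(le_max_left _ _).trans hW, by linarith]
end
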